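/- arXiv:math/9902143 — 3 statements merged into one kernel-verified Lean document; each statement's English description precedes it below -/
import Mathlib

section
/- Let n ≥ 2 and let M be the n²×n² skew-symmetric integer matrix with rows and columns indexed by pairs [i,j], 1 ≤ i,j ≤ n, in lexicographic order, whose entry h_{[i,j],[s,t]} equals s+t-i-j if (s-i)(t-j) ≤ 0, equals s+t-i-j-2 if s > i and t > j, and equals s+t-i-j+2 if s < i and t < j. Then there exists W ∈ SL(n²,ℤ) such that W·M·Wᵗ is the block-diagonal matrix diag(D_1, D_2, …, D_{(n²-n)/2}, 0, …, 0), where D_1 is the 2×2 matrix [[0,1],[-1,0]], D_j is the 2×2 matrix [[0,2],[-2,0]] for j = 2,…,(n²-n)/2, and the remaining n diagonal entries are 0. -/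
open Matrix

noncomputable section

/-- The exponent `h_{[i,j],[s,t]}` of the quasipolynomial algebra `\bar J^0_q(n)`:
`s+t-i-j` if `(s-i)(t-j) ≤ 0`, `s+t-i-j-2` if `s > i` and `t > j`, and `s+t-i-j+2`
if `s < i` and `t < j`. -/
def hJ0 (i j s t : ℕ) : ℤ :=
  if ((s : ℤ) - (i : ℤ)) * ((t : ℤ) - (j : ℤ)) ≤ 0 then (s : ℤ) + t - i - j
  else if i < s ∧ j < t then (s : ℤ) + t - i - j - 2
  else (s : ℤ) + t - i - j + 2

/-- The defining matrix of `\bar J^0_q(n)`: the pair `[i,j]` (0-based) is encoded as the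
index `i·n + j`, which realizes the lexicographic order on pairs. -/
def MJ0 (n : ℕ) : Matrix (Fin (n ^ 2)) (Fin (n ^ 2)) ℤ :=
  Matrix.of fun a b =>
    hJ0 ((a : ℕ) / n) ((a : ℕ) % n) ((b : ℕ) / n) ((b : ℕ) % n)

/-- The canonical form: `diag(D_1, …, D_{(n²-n)/2}, 0, …, 0)` with
`D_1 = [[0,1],[-1,0]]`, `D_j = [[0,2],[-2,0]]` for `j ≥ 2`, and `n` zeros. -/
def DJ0 (n : ℕ) : Matrix (Fin (n ^ 2)) (Fin (n ^ 2)) ℤ :=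
  Matrix.of fun a b =>
    if (a : ℕ) + 1 = (b : ℕ) ∧ (a : ℕ) % 2 = 0 ∧ (b : ℕ) < n ^ 2 - n then
      (if (a : ℕ) = 0 then 1 else 2)
    else if (b : ℕ) + 1 = (a : ℕ) ∧ (b : ℕ) % 2 = 0 ∧ (a : ℕ) < n ^ 2 - n then
      (if (b : ℕ) = 0 then -1 else -2)
    else 0

def stdF {R} [CommRing R] (c : ℕ → R) (i j : ℕ) : R :=
  if i + 1 = j ∧ i % 2 = 0 then c i else if j + 1 = i ∧ j % 2 = 0 then - c j else 0

def perpF {R V} [CommRing R] [AddCommGroup V] [Module R V] (B : V →ₗ[R] V →ₗ[R] R) (x y : V) :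
    Submodule R V := LinearMap.ker (B x) ⊓ LinearMap.ker (B y)

theorem mem_perpF {R V} [CommRing R] [AddCommGroup V] [Module R V] (B : V →ₗ[R] V →ₗ[R] R)
    (x y v : V) : v ∈ perpF B x y ↔ B x v = 0 ∧ B y v = 0 := by
  simp [perpF]

theorem basisF {R V} [CommRing R] [AddCommGroup V] [Module R V]
    (B : V →ₗ[R] V →ₗ[R] R) (halt : ∀ x, B x x = 0) (hsk : ∀ x y, B x y = - B y x)
    (x y : V) (hxy : B x y = 1) (m : ℕ) (b' : Module.Basis (Fin m) R (perpF B x y)) :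
    ∃ b : Module.Basis (Fin (m + 2)) R V, ∀ i, b i =
      (Fin.cons x (Fin.cons y (fun i => (b' i : V)) : Fin (m+1) → V) : Fin (m+2) → V) i := by
  have hyx : B y x = -1 := by rw [hsk, hxy]
  let b1 : Module.Basis (Fin (m + 1)) R (LinearMap.ker (B y)) :=
    Module.Basis.mkFinConsOfLE y (by simp [halt]) b' (by
      intro v hv; exact ((mem_perpF B x y v).1 hv).2)
      (by
        intro c v hv h
        have h1 := congrArg (B x) h
        simpa [hxy, ((mem_perpF B x y v).1 hv).1] using h1)
      (by
        intro z hz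
        refine ⟨- B x z, ?_⟩
        rw [mem_perpF]
        have : B y z = 0 := hz
        simp [hxy, halt, this])
  let b : Module.Basis (Fin (m + 2)) R V :=
    Module.Basis.mkFinCons x b1
      (by
        intro c v hv h
        have h1 := congrArg (B y) h
        have hv' : B y v = 0 := hv
        simpa [hyx, hv'] using h1)
      (by
        intro z
        refine ⟨B y z, ?_⟩
        simp [hyx])
  have h1 : (b1 : Fin (m + 1) → LinearMap.ker (B y)) = Fin.cons ⟨y, by simp [halt]⟩
      (Submodule.inclusion (fun v hv => ((mem_perpF B x y v).1 hv).2) ∘ b') :=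
    Module.Basis.coe_mkFinConsOfLE _ _ _ _ _ _
  refine ⟨b, ?_⟩
  intro i
  refine Fin.cases ?_ (fun i => ?_) i
  · simp [b]
  · refine Fin.cases ?_ (fun i => ?_) i <;> (simp [b, h1]; try rfl)

theorem stepF {R V} [CommRing R] [AddCommGroup V] [Module R V]
    (B : V →ₗ[R] V →ₗ[R] R) (halt : ∀ x, B x x = 0) (hsk : ∀ x y, B x y = - B y x)
    (x y : V) (hxy : B x y = 1) (m : ℕ) (b' : Module.Basis (Fin m) R (perpF B x y)) (c' : ℕ → R)
    (hb' : ∀ i j, B (b' i : V) (b' j : V) = stdF c' i j) :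
    ∃ b : Module.Basis (Fin (m + 2)) R V, ∀ i j, B (b i) (b j) =
      stdF (fun k => if k = 0 then 1 else c' (k - 2)) i j := by
  have hyx : B y x = -1 := by rw [hsk, hxy]
  have hp : ∀ i, B x (b' i : V) = 0 ∧ B y (b' i : V) = 0 := fun i =>
    (mem_perpF B x y _).1 (b' i).2
  have hp' : ∀ i, B (b' i : V) x = 0 ∧ B (b' i : V) y = 0 := fun i => by
    rw [hsk, hsk _ y, (hp i).1, (hp i).2]; simp
  obtain ⟨b, hb⟩ := basisF B halt hsk x y hxy m b'
  refine ⟨b, fun i j => ?_⟩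
  rw [hb, hb]
  refine Fin.cases ?_ (fun i => ?_) i <;> refine Fin.cases ?_ (fun j => ?_) j
  · simp [halt, stdF]
  · refine Fin.cases ?_ (fun j => ?_) j
    · simp [hxy, stdF]
    · simp [hp, stdF]
  · refine Fin.cases ?_ (fun i => ?_) i
    · simp [hyx, stdF]
    · simp [hp', stdF]
  · refine Fin.cases ?_ (fun i => ?_) i <;> refine Fin.cases ?_ (fun j => ?_) j
    · simp [halt, stdF]
    · simp [hp, stdF]
      try grind
    · simp [hp', stdF]
      try grind
    · simp [hb', stdF]
      try grind

theorem ker_perpF {R V} [CommRing R] [AddCommGroup V] [Module R V]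
    (B : V →ₗ[R] V →ₗ[R] R) (hsk : ∀ x y, B x y = - B y x)
    (x y : V) : LinearMap.ker B ≤ perpF B x y := by
  intro v hv
  have : ∀ w, B v w = 0 := fun w => by
    rw [LinearMap.mem_ker.1 hv]; rfl
  rw [mem_perpF, hsk, hsk y, this, this]; simp

theorem zero_of_perpF {R V} [CommRing R] [AddCommGroup V] [Module R V]
    (B : V →ₗ[R] V →ₗ[R] R) (halt : ∀ x, B x x = 0) (hsk : ∀ x y, B x y = - B y x)
    (x y : V) (hxy : B x y = 1) (v : V) (hv : v ∈ perpF B x y) (d : R)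
    (h : ∀ w ∈ perpF B x y, d ∣ B v w) (w : V) : d ∣ B v w := by
  have hyx : B y x = -1 := by rw [hsk, hxy]
  rw [mem_perpF] at hv
  have h1 := h (w + B y w • x - B x w • y) (by
    rw [mem_perpF]; simp [hxy, hyx, halt])
  have h2 : B v x = 0 := by rw [hsk, hv.1, neg_zero]
  have h3 : B v y = 0 := by rw [hsk, hv.2, neg_zero]
  simpa [h2, h3] using h1

/-- saturation passes to the perp -/
theorem sat_perpF {R V} [CommRing R] [IsDomain R] [AddCommGroup V] [Module R V]
    (B : V →ₗ[R] V →ₗ[R] R)  (hsk : ∀ x y, B x y = - B y x)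
    (x y : V) (v : V) (hv : v ∈ perpF B x y) (d : R)
    (h : ∃ z k, v = d • z + k ∧ ∀ w, B k w = 0) :
    ∃ z ∈ perpF B x y, ∃ k ∈ perpF B x y, v = d • z + k ∧ ∀ w, B k w = 0 := by
  obtain ⟨z, k, hz, hk⟩ := h
  have hk' : k ∈ perpF B x y := by
    rw [mem_perpF, hsk, hsk y, hk, hk]; simp
  by_cases hd : d = 0
  · exact ⟨0, zero_mem _, k, hk', by simp [hz, hd], hk⟩
  · refine ⟨z, ?_, k, hk', hz, hk⟩
    have h1 : d • z ∈ perpF B x y := by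
      have : d • z = v - k := by rw [hz]; simp
      rw [this]; exact sub_mem hv hk'
    rw [mem_perpF] at h1 ⊢
    simpa [hd] using h1

theorem mainF {R : Type} [CommRing R] [IsDomain R] [IsPrincipalIdealRing R] (N : ℕ) :
    ∀ (V : Type) [AddCommGroup V] [Module R V] [Module.Free R V] [Module.Finite R V]
    (B : V →ₗ[R] V →ₗ[R] R) (_ : ∀ x, B x x = 0) (_ : ∀ x y, B x y = - B y x)
    (_ : ∀ (d : R) x, (∀ y, d ∣ B x y) → ∃ z k, x = d • z + k ∧ ∀ w, B k w = 0)
    (_ : Module.finrank R V = N),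
    ∃ r, 2 * r + Module.finrank R (LinearMap.ker B) = N ∧
      ∃ b : Module.Basis (Fin N) R V, ∀ i j, B (b i) (b j) =
        stdF (fun k => if k < 2 * r then 1 else 0) i j := by
  induction N using Nat.strong_induction_on with
  | _ N ih =>
  intro V _ _ _ _ B halt hsk hsat hN
  by_cases hB : B = 0
  · subst hB
    refine ⟨0, ?_, (Module.finBasisOfFinrankEq R V hN), ?_⟩
    · rw [LinearMap.ker_eq_top.2 rfl, finrank_top, hN]; simp
    · simp [stdF]
  · obtain ⟨x0, hx0⟩ : ∃ x, B x ≠ 0 := by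
      by_contra! h; exact hB (LinearMap.ext h)
    obtain ⟨g, hg⟩ := (IsPrincipalIdealRing.principal (LinearMap.range (B x0))).principal
    have hg0 : g ≠ 0 := by
      rintro rfl
      apply hx0
      rw [← LinearMap.range_eq_bot, hg]; simp
    have hdvd : ∀ y, g ∣ B x0 y := fun y => by
      have : B x0 y ∈ LinearMap.range (B x0) := ⟨y, rfl⟩
      rw [hg] at this
      exact Ideal.mem_span_singleton.1 this
    obtain ⟨y, hy⟩ : ∃ y, B x0 y = g := by
      have : g ∈ LinearMap.range (B x0) := by rw [hg]; exact Submodule.mem_span_singleton_self g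
      exact this
    obtain ⟨x, k, hxk, hk⟩ := hsat g x0 hdvd
    have hxy : B x y = 1 := by
      rw [hxk] at hy
      simp [hk] at hy
      exact (mul_eq_left₀ hg0).1 hy
    let B' : perpF B x y →ₗ[R] perpF B x y →ₗ[R] R := B.domRestrict₁₂ _ _
    have hB' : ∀ v w, B' v w = B v w := fun v w => rfl
    have hsat' : ∀ (d : R) v, (∀ w, d ∣ B' v w) → ∃ z k, v = d • z + k ∧ ∀ w, B' k w = 0 := by
      intro d v h
      have h1 := zero_of_perpF B halt hsk x y hxy v v.2 d (fun w hw => h ⟨w, hw⟩)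
      obtain ⟨z, hz, k, hk, h2, h3⟩ := sat_perpF B hsk x y v v.2 d (hsat d v h1)
      exact ⟨⟨z, hz⟩, ⟨k, hk⟩, Subtype.ext h2, fun w => h3 w⟩
    have hker : LinearMap.ker B' = (LinearMap.ker B).comap (perpF B x y).subtype := by
      ext v
      simp only [LinearMap.mem_ker, Submodule.mem_comap, Submodule.subtype_apply]
      constructor
      · intro h
        ext w
        have := zero_of_perpF B halt hsk x y hxy v v.2 0 (fun w hw => by
          have := LinearMap.congr_fun h ⟨w, hw⟩
          rw [hB'] at this
          simp [this]) w
        simpa using this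
      · intro h
        ext w
        rw [hB', h]; rfl
    have hfr : Module.finrank R (LinearMap.ker B') = Module.finrank R (LinearMap.ker B) := by
      rw [hker]
      exact (Submodule.comapSubtypeEquivOfLe (ker_perpF B hsk x y)).finrank_eq
    obtain ⟨b0, -⟩ := basisF B halt hsk x y hxy _ (Module.finBasis R (perpF B x y))
    have hm : Module.finrank R (perpF B x y) + 2 = N := by
      rw [← hN, Module.finrank_eq_card_basis b0]; simp
    obtain ⟨r, hr, b', hb'⟩ := ih _ (by omega) (perpF B x y) B' (fun v => halt v)
      (fun v w => hsk v w) hsat' rfl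
    obtain ⟨b, hb⟩ := stepF B halt hsk x y hxy _ b' _ hb'
    subst hm
    refine ⟨r + 1, by omega, b, fun i j => ?_⟩
    rw [hb]
    unfold stdF
    grind

section Arr
open Finset

theorem hJ0_eq (i j s t : ℕ) : hJ0 i j s t = (s : ℤ) + t - i - j
    - 2 * (if i < s ∧ j < t then 1 else 0) + 2 * (if s < i ∧ t < j then 1 else 0) := by
  unfold hJ0
  rcases lt_trichotomy i s with h | h | h <;> rcases lt_trichotomy j t with h' | h' | h'
  · rw [if_neg (by push Not; apply mul_pos <;> omega)]
    simp [h, h', h.not_gt]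
  · subst h'; simp
  · rw [if_pos (by apply mul_nonpos_of_nonneg_of_nonpos <;> omega)]
    simp [h.not_gt, h'.not_gt]
  · subst h; simp
  · subst h; simp
  · subst h; simp
  · rw [if_pos (by apply mul_nonpos_of_nonpos_of_nonneg <;> omega)]
    simp [h.not_gt, h'.not_gt]
  · subst h'; simp
  · rw [if_neg (by push Not; apply mul_pos_of_neg_of_neg <;> omega)]
    simp [h, h', h.not_gt]

theorem hJ0_skew (i j s t : ℕ) : hJ0 s t i j = - hJ0 i j s t := by
  rw [hJ0_eq, hJ0_eq]; ring

/-- the action of the matrix on an array -/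
def appJ (n : ℕ) (X : ℕ → ℕ → ℤ) (i j : ℕ) : ℤ :=
  ∑ s ∈ range n, ∑ t ∈ range n, hJ0 i j s t * X s t

def totJ (n : ℕ) (X : ℕ → ℕ → ℤ) : ℤ := ∑ s ∈ range n, ∑ t ∈ range n, X s t

theorem sum2_ite (n : ℕ) (X : ℕ → ℕ → ℤ) (i j : ℕ) (hi : i < n) (hj : j < n) :
    ∑ s ∈ range n, ∑ t ∈ range n, (if s = i ∧ t = j then X s t else 0) = X i j := by
  rw [Finset.sum_eq_single i, Finset.sum_eq_single j]
  · simp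
  · intro b _ hb; simp [hb]
  · simp [hj]
  · intro b _ hb; simp [hb]
  · simp [hi]

theorem ite_and_mul (p q : Prop) [Decidable p] [Decidable q] :
    (if p ∧ q then 1 else 0 : ℤ) = (if p then 1 else 0) * (if q then 1 else 0) := by
  split_ifs <;> simp_all

theorem ite_gt_succ (i s : ℕ) :
    (if i < s then 1 else 0 : ℤ) = (if i + 1 < s then 1 else 0) + (if s = i + 1 then 1 else 0) := by
  grind

theorem ite_lt_succ (i s : ℕ) :
    (if s < i + 1 then 1 else 0 : ℤ) = (if s < i then 1 else 0) + (if s = i then 1 else 0) := by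
  grind

theorem appJ_diff2 (n : ℕ) (X : ℕ → ℕ → ℤ) (i j : ℕ) (hi : i + 1 < n) (hj : j + 1 < n) :
    appJ n X (i+1) (j+1) - appJ n X i (j+1) - appJ n X (i+1) j + appJ n X i j
      = 2 * (X i j - X (i+1) (j+1)) := by
  rw [← sum2_ite n X i j (by omega) (by omega), ← sum2_ite n X (i+1) (j+1) hi hj]
  simp only [appJ, ← Finset.sum_sub_distrib, ← Finset.sum_add_distrib, Finset.mul_sum]
  refine Finset.sum_congr rfl fun s _ => Finset.sum_congr rfl fun t _ => ?_
  have : hJ0 (i+1) (j+1) s t - hJ0 i (j+1) s t - hJ0 (i+1) j s t + hJ0 i j s t =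
    2 * ((if s = i ∧ t = j then 1 else 0) - (if s = i+1 ∧ t = j+1 then 1 else 0)) := by
    simp only [hJ0_eq, ite_and_mul]
    rw [ite_gt_succ i s, ite_gt_succ j t, ite_lt_succ i s, ite_lt_succ j t]
    push_cast
    ring
  calc _ = (hJ0 (i+1) (j+1) s t - hJ0 i (j+1) s t - hJ0 (i+1) j s t + hJ0 i j s t) * X s t := by ring
    _ = _ := by rw [this]; split_ifs <;> ring

theorem appJ_row (m : ℕ) (X : ℕ → ℕ → ℤ) (j : ℕ) (hj : j < m) :
    appJ (m+1) X 0 (j+1) - appJ (m+1) X 0 j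
      = 2 * (∑ s ∈ range m, X (s+1) (j+1)) - totJ (m+1) X := by
  have h : ∑ s ∈ range m, X (s+1) (j+1) = ∑ s ∈ range (m+1), ∑ t ∈ range (m+1),
      if 0 < s ∧ t = j+1 then X s t else 0 := by
    rw [Finset.sum_range_succ']
    simp [hj]
  rw [h]
  simp only [appJ, totJ, ← Finset.sum_sub_distrib, Finset.mul_sum]
  refine Finset.sum_congr rfl fun s _ => Finset.sum_congr rfl fun t _ => ?_
  have : hJ0 0 (j+1) s t - hJ0 0 j s t = 2 * (if 0 < s ∧ t = j+1 then 1 else 0) - 1 := by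
    simp only [hJ0_eq]
    push_cast
    split_ifs <;> grind
  rw [← sub_mul, this]
  split_ifs <;> ring

theorem appJ_col (m : ℕ) (X : ℕ → ℕ → ℤ) (i : ℕ) (hi : i < m) :
    appJ (m+1) X (i+1) 0 - appJ (m+1) X i 0
      = 2 * (∑ t ∈ range m, X (i+1) (t+1)) - totJ (m+1) X := by
  have h : ∑ t ∈ range m, X (i+1) (t+1) = ∑ s ∈ range (m+1), ∑ t ∈ range (m+1),
      if s = i+1 ∧ 0 < t then X s t else 0 := by
    rw [Finset.sum_comm, Finset.sum_range_succ']
    simp [hi]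
  rw [h]
  simp only [appJ, totJ, ← Finset.sum_sub_distrib, Finset.mul_sum]
  refine Finset.sum_congr rfl fun s _ => Finset.sum_congr rfl fun t _ => ?_
  have : hJ0 (i+1) 0 s t - hJ0 i 0 s t = 2 * (if s = i+1 ∧ 0 < t then 1 else 0) - 1 := by
    simp only [hJ0_eq]
    push_cast
    split_ifs <;> grind
  rw [← sub_mul, this]
  split_ifs <;> ring

theorem appJ_zero (m : ℕ) (X : ℕ → ℕ → ℤ) :
    appJ (m+1) X 0 0 = ∑ s ∈ range m, ((s+1 : ℕ) : ℤ) * ∑ t ∈ range (m+1), X (s+1) t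
      + ∑ t ∈ range m, ((t+1 : ℕ) : ℤ) * ∑ s ∈ range (m+1), X s (t+1)
      - 2 * ∑ s ∈ range m, ∑ t ∈ range m, X (s+1) (t+1) := by
  have h1 : ∑ s ∈ range m, ((s+1 : ℕ) : ℤ) * ∑ t ∈ range (m+1), X (s+1) t =
      ∑ s ∈ range (m+1), ∑ t ∈ range (m+1), (s : ℤ) * X s t := by
    rw [Finset.sum_range_succ' (fun s => ∑ t ∈ range (m+1), (s : ℤ) * X s t)]
    simp [Finset.mul_sum]
  have h2 : ∑ t ∈ range m, ((t+1 : ℕ) : ℤ) * ∑ s ∈ range (m+1), X s (t+1) =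
      ∑ s ∈ range (m+1), ∑ t ∈ range (m+1), (t : ℤ) * X s t := by
    rw [Finset.sum_comm, Finset.sum_range_succ' (fun t => ∑ s ∈ range (m+1), (t : ℤ) * X s t)]
    simp [Finset.mul_sum]
  have h3 : ∑ s ∈ range m, ∑ t ∈ range m, X (s+1) (t+1) =
      ∑ s ∈ range (m+1), ∑ t ∈ range (m+1), if 0 < s ∧ 0 < t then X s t else 0 := by
    rw [Finset.sum_range_succ']
    simp [Finset.sum_range_succ' _ m]
  rw [h1, h2, h3]
  simp only [appJ, ← Finset.sum_sub_distrib, ← Finset.sum_add_distrib, Finset.mul_sum]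
  refine Finset.sum_congr rfl fun s _ => Finset.sum_congr rfl fun t _ => ?_
  rw [hJ0_eq]
  simp
  split_ifs <;> ring

theorem factF2 (m : ℕ) (hm : 1 ≤ m) (X : ℕ → ℕ → ℤ) (d : ℤ)
    (h : ∀ i j, i ≤ m → j ≤ m → 2 * d ∣ appJ (m+1) X i j)
    (h0 : ∀ i, i ≤ m → X i 0 = 0) : ∀ i j, i ≤ m → j ≤ m → d ∣ X i j := by
  have two : ∀ a, 2 * d ∣ 2 * a → d ∣ a := fun a ha => (mul_dvd_mul_iff_left two_ne_zero).1 ha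
  have hT : ∀ i j, i < m → j < m → d ∣ X i j - X (i+1) (j+1) := by
    intro i j hi hj
    apply two
    rw [← appJ_diff2 (m+1) X i j (by omega) (by omega)]
    refine dvd_add (dvd_sub (dvd_sub ?_ ?_) ?_) ?_ <;> apply h <;> omega
  have hTk : ∀ k i j, i + k ≤ m → j + k ≤ m → d ∣ X i j - X (i+k) (j+k) := by
    intro k
    induction k with
    | zero => simp
    | succ k ih =>
      intro i j hi hj
      have h1 := ih i j (by omega) (by omega)
      have h2 := hT (i+k) (j+k) (by omega) (by omega)
      have := dvd_add h1 h2
      rw [sub_add_sub_cancel] at this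
      exact this
  have hcol : ∀ j, j < m → 2 * d ∣ 2 * (∑ s ∈ range m, X (s+1) (j+1)) - totJ (m+1) X := by
    intro j hj
    rw [← appJ_row m X j hj]
    exact dvd_sub (h _ _ (by omega) (by omega)) (h _ _ (by omega) (by omega))
  have hlow : ∀ i j, j ≤ i → i ≤ m → d ∣ X i j := by
    intro i j hji hi
    have := hTk j (i-j) 0 (by omega) (by omega)
    rw [h0 _ (by omega), Nat.sub_add_cancel hji, zero_add, zero_sub, dvd_neg] at this
    exact this
  have hup : ∀ j, j + 1 < m → d ∣ X 0 (j+1) := by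
    intro j hj
    have h1 : d ∣ ∑ s ∈ range m, X (s+1) (j+1+1) - ∑ s ∈ range m, X (s+1) (j+1) := two _ (by
      have := dvd_sub (hcol (j+1) hj) (hcol j (by omega))
      rw [sub_sub_sub_cancel_right, ← mul_sub] at this
      exact this)
    obtain ⟨m', rfl⟩ : ∃ m', m = m' + 1 := ⟨m - 1, by omega⟩
    rw [Finset.sum_range_succ', Finset.sum_range_succ (fun s => X (s+1) (j+1))] at h1
    have h2 : d ∣ ∑ s ∈ range m', (X (s+1) (j+1) - X (s+1+1) (j+1+1)) := by
      apply Finset.dvd_sum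
      intro s hs
      rw [Finset.mem_range] at hs
      exact hT _ _ (by omega) (by omega)
    rw [Finset.sum_sub_distrib] at h2
    have h3 := hlow (m'+1) (j+1) (by omega) (by omega)
    have h4 := hT 0 (j+1) (by omega) (by omega)
    have := dvd_add (dvd_add (dvd_add h1 h2) h3) h4
    refine (Int.dvd_iff_dvd_of_dvd_sub ?_).1 this
    ring_nf
    simp
  have hup' : ∀ i j, i ≤ m → j ≤ m → ¬ (i = 0 ∧ j = m) → d ∣ X i j := by
    intro i j hi hj hc
    rcases le_or_gt j i with hji | hji
    · exact hlow i j hji hi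
    · have h1 := hTk i 0 (j-i) (by omega) (by omega)
      obtain ⟨k, hk⟩ : ∃ k, j - i = k + 1 := ⟨j-i-1, by omega⟩
      have h2 := hup k (by omega)
      rw [← hk] at h2
      rw [Nat.sub_add_cancel hji.le, zero_add] at h1
      exact (dvd_sub_right h2).1 h1
  have hcorner : d ∣ X 0 m := by
    have h1 := (Dvd.intro_left 2 rfl : d ∣ 2 * d).trans (hcol 0 (by omega))
    have h2 : d ∣ ∑ s ∈ range m, X (s+1) (0+1) := by
      apply Finset.dvd_sum
      intro s hs
      rw [Finset.mem_range] at hs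
      exact hlow _ _ (by omega) (by omega)
    have h3 : d ∣ totJ (m+1) X := (dvd_sub_right (h2.mul_left 2)).1 h1
    rw [totJ, Finset.sum_range_succ', Finset.sum_range_succ _ m] at h3
    have h4 : d ∣ ∑ k ∈ range m, ∑ t ∈ range (m+1), X (k+1) t :=
      Finset.dvd_sum fun s hs => Finset.dvd_sum fun t ht => by
        rw [Finset.mem_range] at hs ht
        exact hup' _ _ (by omega) (by omega) (by omega)
    have h5 : d ∣ ∑ t ∈ range m, X 0 t :=
      Finset.dvd_sum fun t ht => by
        rw [Finset.mem_range] at ht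
        exact hup' _ _ (by omega) (by omega) (by omega)
    exact (dvd_add_right h5).1 ((dvd_add_right h4).1 h3)
  intro i j hi hj
  by_cases hc : i = 0 ∧ j = m
  · rw [hc.1, hc.2]; exact hcorner
  · exact hup' i j hi hj hc

theorem per_sum (m : ℕ) (p : ℕ → ℤ) (hp : ∀ k, p (k + m) = p k) (k : ℕ) :
    ∑ s ∈ range m, p (s + k) = ∑ s ∈ range m, p s := by
  induction k with
  | zero => simp
  | succ k ih =>
    rw [← ih]
    have h1 := Finset.sum_range_succ (fun s => p (s + k)) m
    rw [Finset.sum_range_succ'] at h1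
    have h2 := hp k
    rw [add_comm k m] at h2
    simp only [zero_add, h2] at h1
    rw [← add_right_cancel h1]
    exact Finset.sum_congr rfl fun s _ => by congr 1; ring


def solJ (m : ℕ) (t : ℕ → ℤ) (s j : ℕ) : ℤ :=
  if s = m ∧ j = 0 then t m
  else if s = 0 ∧ j = m then t 0 - t m - m * ∑ k ∈ range m, t k
  else t ((s + (m - j)) % m)

theorem solJ_first (m : ℕ) (t : ℕ → ℤ) (i : ℕ) (hi : i ≤ m) : solJ (m) t i 0 = t i := by
  unfold solJ
  rcases hi.eq_or_lt with h | h
  · simp [h]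
  · simp [h.ne, Nat.mod_eq_of_lt h]
    intro _ h'; omega

theorem factF1 (q : ℕ) (t : ℕ → ℤ) (i j : ℕ) (hi : i ≤ q+1) (hj : j ≤ q+1) :
    appJ (q+2) (solJ (q+1) t) i j = 0 := by
  set Y := solJ (q+1) t with hY
  set T := ∑ k ∈ range (q+1), t k with hT
  have hper := per_sum (q+1) (fun k => t (k % (q+1))) (by simp)
  have hTp : ∑ s ∈ range (q+1), t (s % (q+1)) = T :=
    Finset.sum_congr rfl fun s hs => by
      rw [Nat.mod_eq_of_lt (Finset.mem_range.1 hs)]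
  have hT' : T = ∑ k ∈ range q, t (k+1) + t 0 := Finset.sum_range_succ' _ _
  have hcol : ∀ j, j < q+1 → ∑ s ∈ range (q+1), Y (s+1) (j+1) = T := by
    intro j hj
    rw [← hTp, ← hper (1 + (q + 1 - (j+1)))]
    refine Finset.sum_congr rfl fun s hs => ?_
    simp [hY, solJ, add_assoc]
  have hrow : ∀ i, ∑ s ∈ range (q+1), Y (i+1) (s+1) = T := by
    intro i
    rw [← hTp, ← hper (i+1), ← Finset.sum_range_reflect]
    refine Finset.sum_congr rfl fun s hs => ?_
    rw [Finset.mem_range] at hs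
    simp only [hY, solJ]
    rw [if_neg (by omega), if_neg (by omega)]
    congr 2; omega
  have hfirst : ∀ i, i ≤ q+1 → Y i 0 = t i := solJ_first (q+1) t
  have htop : ∀ j, j < q → Y 0 (j+1) = t (q-1-j+1) := by
    intro j hj
    simp only [hY, solJ]
    rw [if_neg (by omega), if_neg (by omega), Nat.mod_eq_of_lt (by omega)]
    congr 1; omega
  have hcorner : Y 0 (q+1) = t 0 - t (q+1) - (q+1 : ℕ) * T := by
    simp [hY, solJ, ← hT]
  have hdiag : Y 0 0 = t 0 := hfirst 0 (by omega)
  have hrowf : ∀ i, i < q+1 → ∑ s ∈ range (q+2), Y (i+1) s = T + t (i+1) := by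
    intro i hi
    rw [Finset.sum_range_succ', hrow, hfirst _ (by omega)]
  have hcolf : ∀ j, j < q+1 → ∑ s ∈ range (q+2), Y s (j+1) = T + Y 0 (j+1) := by
    intro j hj
    rw [Finset.sum_range_succ', hcol _ hj]
  have hrow0 : ∑ s ∈ range (q+2), Y 0 s = T + (t 0 - t (q+1) - (q+1 : ℕ) * T) := by
    rw [Finset.sum_range_succ, hcorner, Finset.sum_range_succ', hdiag, hT',
      ← Finset.sum_range_reflect (fun k => t (k+1)) q]
    congr 2
    exact Finset.sum_congr rfl fun s hs => htop s (Finset.mem_range.1 hs)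
  have htot : totJ (q+2) Y = 2 * T := by
    rw [totJ, Finset.sum_range_succ', hrow0,
      Finset.sum_congr rfl fun s hs => hrowf s (Finset.mem_range.1 hs), Finset.sum_add_distrib,
      Finset.sum_range_succ (fun k => t (k+1))]
    simp only [sum_const, card_range, nsmul_eq_mul]
    linear_combination - hT'
  have h00 : appJ (q+2) Y 0 0 = 0 := by
    have a1 : ∑ s ∈ range (q+1), ((s+1 : ℕ) : ℤ) * ∑ t ∈ range (q+2), Y (s+1) t =
        ∑ s ∈ range (q+1), ((s+1 : ℕ) : ℤ) * (T + t (s+1)) :=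
      Finset.sum_congr rfl fun s hs => by rw [hrowf s (Finset.mem_range.1 hs)]
    have a2 : ∑ t ∈ range (q+1), ((t+1 : ℕ) : ℤ) * ∑ s ∈ range (q+2), Y s (t+1) =
        ∑ s ∈ range (q+1), ((s+1 : ℕ) : ℤ) * (T + Y 0 (s+1)) :=
      Finset.sum_congr rfl fun s hs => by rw [hcolf s (Finset.mem_range.1 hs)]
    have a3 : ∑ s ∈ range (q+1), ∑ t ∈ range (q+1), Y (s+1) (t+1) = ∑ s ∈ range (q+1), T :=
      Finset.sum_congr rfl fun s hs => hrow s
    rw [appJ_zero, a1, a2, a3]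
    simp only [mul_add, Finset.sum_add_distrib, ← Finset.sum_mul]
    have e1 : 2 * ∑ i ∈ range (q+1), ((i+1 : ℕ) : ℤ) = (q+1) * (q+2) := by
      clear * -
      induction q with
      | zero => simp
      | succ q ih => rw [Finset.sum_range_succ, mul_add, ih]; push_cast; ring
    rw [Finset.sum_range_succ (fun x => ((x+1 : ℕ) : ℤ) * t (x+1)),
      Finset.sum_range_succ (fun x => ((x+1 : ℕ) : ℤ) * Y 0 (x+1)), hcorner]
    have a4 : ∑ x ∈ range q, ((x+1 : ℕ) : ℤ) * Y 0 (x+1) =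
        ∑ x ∈ range q, ((x+1 : ℕ) : ℤ) * t (q-1-x+1) :=
      Finset.sum_congr rfl fun s hs => by rw [htop s (Finset.mem_range.1 hs)]
    have e2 : ∑ x ∈ range q, ((x+1 : ℕ) : ℤ) * t (q-1-x+1) =
        (q+1) * ∑ x ∈ range q, t (x+1) - ∑ x ∈ range q, ((x+1 : ℕ) : ℤ) * t (x+1) := by
      rw [← Finset.sum_range_reflect, Finset.mul_sum, ← Finset.sum_sub_distrib]
      refine Finset.sum_congr rfl fun x hx => ?_
      rw [Finset.mem_range] at hx
      have : q - 1 - (q - 1 - x) = x := by omega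
      rw [this, ← sub_mul]
      congr 1
      omega
    rw [a4, e2]
    simp only [sum_const, card_range, nsmul_eq_mul]
    push_cast
    push_cast at e1
    linear_combination T * e1 - (q+1) * hT'
  have hi0 : ∀ i, i ≤ q+1 → appJ (q+2) Y i 0 = 0 := by
    intro i
    induction i with
    | zero => intro _; exact h00
    | succ i ih =>
      intro hi
      have := appJ_col (q+1) Y i (by omega)
      rw [ih (by omega), hrow, htot] at this
      linarith
  have h0j : ∀ j, j ≤ q+1 → appJ (q+2) Y 0 j = 0 := by
    intro j
    induction j with
    | zero => intro _; exact h00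
    | succ j ih =>
      intro hj
      have := appJ_row (q+1) Y j (by omega)
      rw [ih (by omega), hcol _ (by omega), htot] at this
      linarith
  have hall : ∀ i j, i ≤ q+1 → j ≤ q+1 → appJ (q+2) Y i j = 0 := by
    intro i
    induction i with
    | zero => intro j _ hj; exact h0j j hj
    | succ i ih =>
      intro j
      induction j with
      | zero => intro hi _; exact hi0 _ hi
      | succ j ihj =>
        intro hi hj
        have := appJ_diff2 (q+2) Y i j (by omega) (by omega)
        rw [ih _ (by omega) hj, ih _ (by omega) (by omega), ihj hi (by omega)] at this
        have hd : Y i j = Y (i+1) (j+1) := by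
          simp only [hY, solJ]
          rw [if_neg (by omega), if_neg (by omega), if_neg (by omega), if_neg (by omega)]
          congr 2; omega
        rw [hd] at this
        linarith
  exact hall i j hi hj

theorem sum_grid (n k : ℕ) (G : ℕ → ℤ) :
    ∑ b ∈ range (k * n), G b = ∑ s ∈ range k, ∑ t ∈ range n, G (s * n + t) := by
  induction k with
  | zero => simp
  | succ k ih => rw [Nat.succ_mul, Finset.sum_range_add, ih, Finset.sum_range_succ]

def toArr (n : ℕ) (x : Fin (n ^ 2) → ℤ) (s t : ℕ) : ℤ :=
  if h : s * n + t < n ^ 2 then x ⟨s * n + t, h⟩ else 0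

theorem grid_lt (n s t : ℕ) (hs : s < n) (ht : t < n) : s * n + t < n ^ 2 := by
  nlinarith

theorem grid_div (n s t : ℕ) (ht : t < n) : (s * n + t) / n = s ∧ (s * n + t) % n = t := by
  constructor
  · rw [mul_comm, Nat.mul_add_div (by omega), Nat.div_eq_of_lt ht, add_zero]
  · rw [mul_comm, Nat.mul_add_mod, Nat.mod_eq_of_lt ht]

theorem div_lt_grid (n : ℕ) (a : Fin (n ^ 2)) : (a : ℕ) / n < n ∧ (a : ℕ) % n < n := by
  have := a.2
  have hn : 0 < n := by
    rcases Nat.eq_zero_or_pos n with h | h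
    · subst h; simp at this
    · exact h
  exact ⟨Nat.div_lt_of_lt_mul (by rw [← sq]; exact this), Nat.mod_lt _ hn⟩

theorem toArr_div (n : ℕ) (x : Fin (n ^ 2) → ℤ) (a : Fin (n ^ 2)) :
    toArr n x ((a : ℕ) / n) ((a : ℕ) % n) = x a := by
  unfold toArr
  have h : (a : ℕ) / n * n + (a : ℕ) % n = a := by rw [mul_comm]; exact Nat.div_add_mod _ _
  simp [h]

theorem mulVec_appJ (n : ℕ) (x : Fin (n ^ 2) → ℤ) (a : Fin (n ^ 2)) :
    (MJ0 n *ᵥ x) a = appJ n (toArr n x) ((a : ℕ) / n) ((a : ℕ) % n) := by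
  have h1 : (MJ0 n *ᵥ x) a = ∑ b : Fin (n ^ 2), (fun b : ℕ =>
      hJ0 ((a : ℕ) / n) ((a : ℕ) % n) (b / n) (b % n) * toArr n x (b / n) (b % n)) (b : ℕ) := by
    simp only [Matrix.mulVec, dotProduct, MJ0, Matrix.of_apply, toArr_div]
  rw [h1]
  refine (Fin.sum_univ_eq_sum_range (fun b : ℕ =>
    hJ0 ((a : ℕ) / n) ((a : ℕ) % n) (b / n) (b % n) * toArr n x (b / n) (b % n)) (n ^ 2)).trans ?_
  generalize (a : ℕ) / n = i
  generalize (a : ℕ) % n = j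
  have hr : range (n ^ 2) = range (n * n) := by rw [sq]
  rw [hr, sum_grid]
  unfold appJ
  refine Finset.sum_congr rfl fun s hs => Finset.sum_congr rfl fun t ht => ?_
  rw [Finset.mem_range] at hs ht
  rw [(grid_div n s t ht).1, (grid_div n s t ht).2]

theorem mulVec_grid (n : ℕ) (x : Fin (n ^ 2) → ℤ) (i j : ℕ) (hi : i < n) (hj : j < n) :
    (MJ0 n *ᵥ x) ⟨i * n + j, grid_lt n i j hi hj⟩ = appJ n (toArr n x) i j := by
  rw [mulVec_appJ]
  simp only [(grid_div n i j hj).1, (grid_div n i j hj).2]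

theorem appJ_congr (n : ℕ) (X Y : ℕ → ℕ → ℤ) (h : ∀ i j, i < n → j < n → X i j = Y i j) (i j : ℕ) :
    appJ n X i j = appJ n Y i j := by
  unfold appJ
  refine Finset.sum_congr rfl fun s hs => Finset.sum_congr rfl fun t ht => ?_
  rw [Finset.mem_range] at hs ht
  rw [h s t hs ht]

def solV (q : ℕ) (t : ℕ → ℤ) : Fin ((q+2) ^ 2) → ℤ :=
  fun a => solJ (q+1) t ((a : ℕ) / (q+2)) ((a : ℕ) % (q+2))

theorem toArr_solV (q : ℕ) (t : ℕ → ℤ) (i j : ℕ) (hi : i < q+2) (hj : j < q+2) :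
    toArr (q+2) (solV q t) i j = solJ (q+1) t i j := by
  unfold toArr solV
  rw [dif_pos (grid_lt _ i j hi hj)]
  simp only [(grid_div (q+2) i j hj).1, (grid_div (q+2) i j hj).2]

theorem solV_ker (q : ℕ) (t : ℕ → ℤ) : MJ0 (q+2) *ᵥ solV q t = 0 := by
  ext a
  obtain ⟨h1, h2⟩ := div_lt_grid (q+2) a
  rw [mulVec_appJ, appJ_congr _ _ _ (toArr_solV q t), factF1 q t _ _ (by omega) (by omega)]
  rfl

theorem vec_dvd (q : ℕ) (x : Fin ((q+2) ^ 2) → ℤ) (d : ℤ)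
    (h : ∀ a, 2 * d ∣ (MJ0 (q+2) *ᵥ x) a)
    (h0 : ∀ i, i < q+2 → toArr (q+2) x i 0 = 0) (a) : d ∣ x a := by
  obtain ⟨h1, h2⟩ := div_lt_grid (q+2) a
  rw [← toArr_div (q+2) x a]
  refine factF2 (q+1) (by omega) _ d ?_ (fun i hi => h0 i (by omega)) _ _ (by omega) (by omega)
  intro i j hi hj
  rw [← mulVec_grid (q+2) x i j (by omega) (by omega)]
  exact h _

def formJ (n : ℕ) : (Fin (n ^ 2) → ℤ) →ₗ[ℤ] (Fin (n ^ 2) → ℤ) →ₗ[ℤ] ℤ :=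
  Matrix.toLinearMap₂' ℤ (MJ0 n)

theorem formJ_apply (n : ℕ) (x y : Fin (n ^ 2) → ℤ) : formJ n x y = x ⬝ᵥ (MJ0 n *ᵥ y) :=
  Matrix.toLinearMap₂'_apply' _ _ _

theorem MJ0_transpose (n : ℕ) : (MJ0 n)ᵀ = - MJ0 n := by
  ext a b
  simp only [MJ0, Matrix.transpose_apply, Matrix.of_apply, Matrix.neg_apply]
  exact hJ0_skew _ _ _ _

theorem formJ_skew (n : ℕ) (x y : Fin (n ^ 2) → ℤ) : formJ n x y = - formJ n y x := by
  rw [formJ_apply, formJ_apply, Matrix.dotProduct_mulVec, ← Matrix.mulVec_transpose,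
    MJ0_transpose, Matrix.neg_mulVec, neg_dotProduct, dotProduct_comm]

theorem formJ_alt (n : ℕ) (x : Fin (n ^ 2) → ℤ) : formJ n x x = 0 := by
  have := formJ_skew n x x
  omega

theorem formJ_single (n : ℕ) (x : Fin (n ^ 2) → ℤ) (a : Fin (n ^ 2)) :
    formJ n (Pi.single a 1) x = (MJ0 n *ᵥ x) a := by
  rw [formJ_apply]; simp

theorem formJ_ker (n : ℕ) (x : Fin (n ^ 2) → ℤ) : x ∈ LinearMap.ker (formJ n) ↔ MJ0 n *ᵥ x = 0 := by
  rw [LinearMap.mem_ker]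
  constructor
  · intro h
    ext a
    rw [← formJ_single, formJ_skew, h]; simp
  · intro h
    refine LinearMap.ext fun y => ?_
    rw [formJ_skew, formJ_apply, h]; simp

theorem formJ_sat (q : ℕ) (d : ℤ) (x : Fin ((q+2) ^ 2) → ℤ)
    (h : ∀ w, 2 * d ∣ formJ (q+2) x w) : ∃ z k, x = d • z + k ∧ ∀ w, formJ (q+2) k w = 0 := by
  let k := solV q (fun i => toArr (q+2) x i 0)
  have hk : MJ0 (q+2) *ᵥ k = 0 := solV_ker q _
  have hd : ∀ a, d ∣ (x - k) a := by
    apply vec_dvd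
    · intro a
      rw [Matrix.mulVec_sub, hk, sub_zero, ← formJ_single, formJ_skew, dvd_neg]
      exact h _
    · intro i hi
      have h1 : toArr (q+2) k i 0 = toArr (q+2) x i 0 := by
        rw [toArr_solV q _ i 0 hi (by omega), solJ_first _ _ _ (by omega)]
      have h2 : toArr (q+2) (x - k) i 0 = toArr (q+2) x i 0 - toArr (q+2) k i 0 := by
        unfold toArr; split_ifs <;> simp
      rw [h2, h1, sub_self]
  choose z hz using hd
  refine ⟨z, k, ?_, fun w => ?_⟩
  · ext a
    have := hz a
    simp only [Pi.sub_apply] at this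
    simp only [Pi.add_apply, Pi.smul_apply, smul_eq_mul]
    linarith
  · rw [LinearMap.mem_ker.1 ((formJ_ker _ k).2 hk)]; rfl

theorem formJ_finrank (q : ℕ) : Module.finrank ℤ (LinearMap.ker (formJ (q+2))) = q+2 := by
  let F : (Fin ((q+2)^2) → ℤ) →ₗ[ℤ] (Fin (q+2) → ℤ) :=
    LinearMap.funLeft ℤ ℤ (fun i : Fin (q+2) => ⟨(i : ℕ) * (q+2) + 0, grid_lt _ _ _ i.2 (by omega)⟩)
  have hF : ∀ x (i : Fin (q+2)), F x i = toArr (q+2) x i 0 := by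
    intro x i
    unfold toArr
    rw [dif_pos (grid_lt _ _ _ i.2 (by omega))]
    rfl
  let G := F.comp (LinearMap.ker (formJ (q+2))).subtype
  have hG : Function.Bijective G := by
    constructor
    · rw [← LinearMap.ker_eq_bot, LinearMap.ker_eq_bot']
      rintro ⟨x, hx⟩ h
      rw [formJ_ker] at hx
      ext a
      have := vec_dvd q x 0 (by simp [hx]) (by
        intro i hi
        rw [← hF x ⟨i, hi⟩]
        exact congrFun h ⟨i, hi⟩) a
      simpa using this
    · intro t
      let t' : ℕ → ℤ := fun i => if h : i < q+2 then t ⟨i, h⟩ else 0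
      refine ⟨⟨solV q t', (formJ_ker _ _).2 (solV_ker _ _)⟩, ?_⟩
      ext i
      change F (solV q t') i = t i
      rw [hF, toArr_solV q _ i 0 i.2 (by omega), solJ_first _ _ _ (by omega)]
      simp [t']
  rw [(LinearEquiv.ofBijective G hG).finrank_eq]
  simp

theorem MJ0_mod (n : ℕ) (a b z o : Fin (n ^ 2)) (hz : (z : ℕ) = 0) (ho : (o : ℕ) = 1)
    (hn : 2 ≤ n) : (2 : ℤ) ∣ MJ0 n a b - (MJ0 n a z * MJ0 n o b - MJ0 n a o * MJ0 n z b) := by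
  have key : ∀ i j s t : ℕ, ∃ k, hJ0 i j s t = (s : ℤ) + t - i - j + 2 * k := fun i j s t =>
    ⟨_, by rw [hJ0_eq, sub_add, ← mul_sub, sub_eq_add_neg, ← mul_neg]⟩
  have h1 : 1 / n = 0 := Nat.div_eq_of_lt (by omega)
  have h2 : 1 % n = 1 := Nat.mod_eq_of_lt (by omega)
  simp only [MJ0, Matrix.of_apply, hz, ho, Nat.zero_div, Nat.zero_mod, h1, h2]
  generalize (a : ℕ) / n = i
  generalize (a : ℕ) % n = j
  generalize (b : ℕ) / n = s
  generalize (b : ℕ) % n = t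
  obtain ⟨k1, e1⟩ := key i j s t
  obtain ⟨k2, e2⟩ := key i j 0 0
  obtain ⟨k3, e3⟩ := key 0 1 s t
  obtain ⟨k4, e4⟩ := key i j 0 1
  obtain ⟨k5, e5⟩ := key 0 0 s t
  rw [e1, e2, e3, e4, e5]
  push_cast
  refine ⟨k1 + (s + t - i - j) - k2 * (s + t - 1) - k3 * (-i-j) - 2 * k2 * k3
    + k4 * (s + t) + k5 * (1 - i - j) + 2 * k4 * k5, ?_⟩
  ring

theorem formJ_even (n : ℕ) (hn : 2 ≤ n) (z o : Fin (n ^ 2)) (hz : (z : ℕ) = 0) (ho : (o : ℕ) = 1)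
    (v w : Fin (n ^ 2) → ℤ) (hw : w ∈ perpF (formJ n) (Pi.single z 1) (Pi.single o 1)) :
    (2 : ℤ) ∣ formJ n v w := by
  rw [mem_perpF, formJ_single, formJ_single] at hw
  have h : formJ n v w = ∑ a, ∑ b, v a * w b *
      (MJ0 n a b - (MJ0 n a z * MJ0 n o b - MJ0 n a o * MJ0 n z b)) := by
    have e1 : formJ n v w = ∑ a, ∑ b, v a * w b * MJ0 n a b := by
      rw [formJ_apply]
      simp only [dotProduct, Matrix.mulVec, Finset.mul_sum]
      refine Finset.sum_congr rfl fun a _ => Finset.sum_congr rfl fun b _ => by ring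
    have e2 : ∑ a, ∑ b, v a * w b * (MJ0 n a z * MJ0 n o b - MJ0 n a o * MJ0 n z b) = 0 := by
      refine Finset.sum_eq_zero fun a _ => ?_
      have : ∑ b, v a * w b * (MJ0 n a z * MJ0 n o b - MJ0 n a o * MJ0 n z b) =
          v a * MJ0 n a z * (MJ0 n *ᵥ w) o - v a * MJ0 n a o * (MJ0 n *ᵥ w) z := by
        simp only [dotProduct, Matrix.mulVec, Finset.mul_sum, ← Finset.sum_sub_distrib]
        exact Finset.sum_congr rfl fun b _ => by ring
      rw [this, hw.1, hw.2]; simp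
    simp only [mul_sub (_ * _) (MJ0 n _ _) (_ - _), Finset.sum_sub_distrib]
    rw [e2, ← e1, sub_zero]
  rw [h]
  exact Finset.dvd_sum fun a _ => Finset.dvd_sum fun b _ => (MJ0_mod n a b z o hz ho hn).mul_left _

theorem half_form {R V : Type} [CommRing R] [IsDomain R] [AddCommGroup V] [Module R V]
    (B : V →ₗ[R] V →ₗ[R] R) (c : R) (hc : c ≠ 0)
    (h : ∀ v w, c ∣ B v w) : ∃ C : V →ₗ[R] V →ₗ[R] R, ∀ v w, B v w = c * C v w := by
  choose f hf using h
  refine ⟨LinearMap.mk₂ R f ?_ ?_ ?_ ?_, fun v w => by rw [LinearMap.mk₂_apply]; exact hf v w⟩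
  · intro a b d
    have h1 := hf (a + b) d
    rw [map_add, LinearMap.add_apply, hf, hf] at h1
    apply mul_left_cancel₀ hc
    rw [← h1, mul_add]
  · intro r a b
    have h1 := hf (r • a) b
    rw [map_smul, LinearMap.smul_apply, hf, smul_eq_mul] at h1
    apply mul_left_cancel₀ hc
    rw [← h1, smul_eq_mul]; ring
  · intro a b d
    have h1 := hf a (b + d)
    rw [map_add, hf, hf] at h1
    apply mul_left_cancel₀ hc
    rw [← h1, mul_add]
  · intro r a b
    have h1 := hf a (r • b)
    rw [map_smul, hf, smul_eq_mul] at h1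
    apply mul_left_cancel₀ hc
    rw [← h1, smul_eq_mul]; ring

theorem exists_basisJ (q : ℕ) : ∃ b : Module.Basis (Fin ((q+2)^2)) ℤ (Fin ((q+2)^2) → ℤ),
    ∀ i j, formJ (q+2) (b i) (b j) = DJ0 (q+2) i j := by
  have hpos : 1 < (q+2)^2 := Nat.one_lt_pow (by omega) (by omega)
  let z : Fin ((q+2)^2) := ⟨0, by omega⟩
  let o : Fin ((q+2)^2) := ⟨1, hpos⟩
  let B := formJ (q+2)
  have halt : ∀ x, B x x = 0 := formJ_alt _
  have hsk : ∀ x y, B x y = - B y x := formJ_skew _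
  let x : Fin ((q+2)^2) → ℤ := Pi.single z 1
  let y : Fin ((q+2)^2) → ℤ := Pi.single o 1
  have hxy : B x y = 1 := by
    change formJ (q+2) (Pi.single z 1) (Pi.single o 1) = 1
    rw [formJ_single, Matrix.mulVec_single_one]
    change hJ0 (0 / (q+2)) (0 % (q+2)) (1 / (q+2)) (1 % (q+2)) = 1
    rw [Nat.div_eq_of_lt (by omega : 1 < q+2), Nat.mod_eq_of_lt (by omega : 1 < q+2)]
    simp [hJ0]
  let B' : perpF B x y →ₗ[ℤ] perpF B x y →ₗ[ℤ] ℤ := B.domRestrict₁₂ _ _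
  have hB' : ∀ v w, B' v w = B v w := fun v w => rfl
  obtain ⟨C, hC⟩ := half_form B' 2 two_ne_zero (fun v w => formJ_even (q+2) (by omega) z o rfl rfl v w w.2)
  have hBC : ∀ v w : perpF B x y, B v w = 2 * C v w := hC
  have hsat : ∀ (d : ℤ) v, (∀ w, d ∣ C v w) → ∃ z k, v = d • z + k ∧ ∀ w, C k w = 0 := by
    intro d v h
    have h1 := zero_of_perpF B halt hsk x y hxy v v.2 (2 * d) (fun w hw => by
      have := hBC v ⟨w, hw⟩
      rw [show B v w = 2 * C v ⟨w, hw⟩ from this]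
      exact mul_dvd_mul_left 2 (h _))
    obtain ⟨z, hz, k, hk, h2, h3⟩ := sat_perpF B hsk x y v v.2 d (formJ_sat q d v h1)
    refine ⟨⟨z, hz⟩, ⟨k, hk⟩, Subtype.ext h2, fun w => ?_⟩
    have h4 := hBC ⟨k, hk⟩ w
    rw [show B (⟨k, hk⟩ : perpF B x y) w = 0 from h3 w] at h4
    omega
  have hker : LinearMap.ker C = (LinearMap.ker B).comap (perpF B x y).subtype := by
    ext v
    simp only [LinearMap.mem_ker, Submodule.mem_comap, Submodule.subtype_apply]
    constructor
    · intro h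
      refine LinearMap.ext fun w => ?_
      have := zero_of_perpF B halt hsk x y hxy v v.2 0 (fun w hw => by
        have h1 := LinearMap.congr_fun h ⟨w, hw⟩
        have h2 := hBC v ⟨w, hw⟩
        rw [h1] at h2
        exact zero_dvd_iff.2 h2) w
      exact zero_dvd_iff.1 this
    · intro h
      ext1 w
      have h2 := hBC v w
      rw [h] at h2
      simp only [LinearMap.zero_apply] at h2 ⊢
      omega
  have hfr : Module.finrank ℤ (LinearMap.ker C) = q + 2 := by
    rw [hker]
    exact (Submodule.comapSubtypeEquivOfLe (ker_perpF B hsk x y)).finrank_eq.trans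
      (formJ_finrank q)
  obtain ⟨b0, -⟩ := basisF B halt hsk x y hxy _ (Module.finBasis ℤ (perpF B x y))
  have hm : Module.finrank ℤ (perpF B x y) + 2 = (q+2)^2 := by
    have := Module.finrank_eq_card_basis b0
    simpa using this.symm
  obtain ⟨r, hr, b', hb'⟩ := mainF _ (perpF B x y) C
    (fun v => by have := hBC v v; rw [halt] at this; omega)
    (fun v w => by have := hBC v w; rw [hsk, hBC w v] at this; omega) hsat rfl
  obtain ⟨b, hb⟩ := stepF B halt hsk x y hxy _ b'
    (fun k => 2 * (if k < 2 * r then 1 else 0)) (by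
      intro i j
      rw [hBC, hb']
      unfold stdF
      split_ifs <;> simp)
  refine ⟨b.reindex (finCongr hm), fun i j => ?_⟩
  rw [Module.Basis.reindex_apply, Module.Basis.reindex_apply]
  have := hb ((finCongr hm).symm i) ((finCongr hm).symm j)
  refine this.trans ?_
  simp only [finCongr_symm, finCongr_apply, Fin.val_cast, DJ0, Matrix.of_apply, stdF]
  rw [hfr] at hr
  have hij : (q+2)^2 - (q+2) = 2 * r + 2 := by omega
  rw [hij]
  clear * -
  generalize (i : ℕ) = i
  generalize (j : ℕ) = j
  grind

end Arr

theorem stmt4 (n : ℕ) (hn : 2 ≤ n) :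
    ∃ W : Matrix.SpecialLinearGroup (Fin (n ^ 2)) ℤ,
      (W : Matrix (Fin (n ^ 2)) (Fin (n ^ 2)) ℤ) * MJ0 n *
          (W : Matrix (Fin (n ^ 2)) (Fin (n ^ 2)) ℤ)ᵀ =
        DJ0 n := by
  obtain ⟨q, rfl⟩ : ∃ q, n = q + 2 := ⟨n - 2, by omega⟩
  obtain ⟨b, hb⟩ := exists_basisJ q
  have hpos : 1 < (q+2)^2 := Nat.one_lt_pow (by omega) (by omega)
  let A : Matrix (Fin ((q+2)^2)) (Fin ((q+2)^2)) ℤ := Matrix.of fun i => b i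
  have hA : A * MJ0 (q+2) * Aᵀ = DJ0 (q+2) := by
    ext i j
    rw [← hb, formJ_apply, Matrix.mul_assoc]
    rfl
  have hdet : A.det = 1 ∨ A.det = -1 := by
    have h1 : ((Pi.basisFun ℤ (Fin ((q+2)^2))).toMatrix b) = Aᵀ := by
      ext i j; simp [Module.Basis.toMatrix_apply, A]
    have h2 := (Pi.basisFun ℤ (Fin ((q+2)^2))).toMatrix_mul_toMatrix_flip b
    have h3 := congrArg Matrix.det h2
    rw [Matrix.det_mul, Matrix.det_one, h1, Matrix.det_transpose] at h3
    exact Int.isUnit_iff.1 (IsUnit.of_mul_eq_one _ h3)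
  rcases hdet with h | h
  · exact ⟨⟨A, h⟩, hA⟩
  · let l : Fin ((q+2)^2) := ⟨(q+2)^2 - 1, by omega⟩
    let s : Fin ((q+2)^2) → ℤ := fun i => if i = l then -1 else 1
    refine ⟨⟨Matrix.diagonal s * A, ?_⟩, ?_⟩
    · rw [Matrix.det_mul, h, Matrix.det_diagonal]
      simp [s, Finset.prod_ite_eq']
    · change Matrix.diagonal s * A * MJ0 (q+2) * (Matrix.diagonal s * A)ᵀ = _
      have : Matrix.diagonal s * A * MJ0 (q+2) * (Matrix.diagonal s * A)ᵀ =
          Matrix.diagonal s * (A * MJ0 (q+2) * Aᵀ) * Matrix.diagonal s := by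
        rw [Matrix.transpose_mul, Matrix.diagonal_transpose]
        simp only [Matrix.mul_assoc]
      rw [this, hA]
      ext i j
      rw [Matrix.mul_diagonal, Matrix.diagonal_mul]
      have hi := i.2
      have hj := j.2
      by_cases hc : i = l ∨ j = l
      · have : DJ0 (q+2) i j = 0 := by
          simp only [DJ0, Matrix.of_apply]
          have hc' : (i : ℕ) = (q+2)^2 - 1 ∨ (j : ℕ) = (q+2)^2 - 1 := by
            rcases hc with hc | hc <;> simp [hc, l]
          rw [if_neg (by omega), if_neg (by omega)]
        rw [this]; simp
      · push Not at hc
        simp [s, hc.1, hc.2]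
end
end

section
/- Let n ≥ 2 and let M be the n²×n² skew-symmetric integer matrix with rows and columns indexed by pairs [i,j], 1 ≤ i,j ≤ n, in lexicographic order, whose entry h_{[i,j],[s,t]} equals -2 if i < s and j < t, equals 2 if i > s and j > t, and equals 0 otherwise. Then there exists W ∈ SL(n²,ℤ) such that W·M·Wᵗ is the block-diagonal matrix diag(D_1, …, D_{(n²-n)/2}, 0, …, 0), where each D_i is the 2×2 matrix [[0,2],[-2,0]] and the remaining n diagonal entries are 0. -/
open Matrix

noncomputable section

/-- The exponent `h_{[i,j],[s,t]}` of the quasipolynomial algebra associated to `J^z_q(n)`: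
`-2` if `i < s` and `j < t`, `2` if `i > s` and `j > t`, and `0` otherwise. -/
def hz (i j s t : ℕ) : ℤ :=
  if i < s ∧ j < t then -2 else if s < i ∧ t < j then 2 else 0

/-- The defining matrix of the quasipolynomial algebra of `J^z_q(n)`: the pair `[i,j]`
(0-based) is encoded as the index `i·n + j`, realizing the lexicographic order. -/
def Mz (n : ℕ) : Matrix (Fin (n ^ 2)) (Fin (n ^ 2)) ℤ :=
  Matrix.of fun a b =>
    hz ((a : ℕ) / n) ((a : ℕ) % n) ((b : ℕ) / n) ((b : ℕ) % n)

/-- The canonical form: `diag(D_1, …, D_{(n²-n)/2}, 0, …, 0)` with every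
`D_i = [[0,2],[-2,0]]` and `n` zeros. -/
def Dz (n : ℕ) : Matrix (Fin (n ^ 2)) (Fin (n ^ 2)) ℤ :=
  Matrix.of fun a b =>
    if (a : ℕ) + 1 = (b : ℕ) ∧ (a : ℕ) % 2 = 0 ∧ (b : ℕ) < n ^ 2 - n then 2
    else if (b : ℕ) + 1 = (a : ℕ) ∧ (b : ℕ) % 2 = 0 ∧ (a : ℕ) < n ^ 2 - n then -2
    else 0


def Dr (r i j : ℕ) : ℤ :=
  if i + 1 = j ∧ i % 2 = 0 ∧ j < r then 1
  else if j + 1 = i ∧ j % 2 = 0 ∧ i < r then -1 else 0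

theorem symp (k : ℕ) : ∀ (L : Type) [AddCommGroup L] [Module.Free ℤ L] [Module.Finite ℤ L]
    (w : L →ₗ[ℤ] L →ₗ[ℤ] ℤ), (∀ x, w x x = 0) →
    (∀ (d : ℤ) (x : L), d ≠ 0 → (∀ y, d ∣ w x y) → ∃ x', ∀ y, w x y = d * w x' y) →
    Module.finrank ℤ L = k →
    ∃ r, 2 * r ≤ k ∧ ∃ b : Module.Basis (Fin k) ℤ L, ∀ i j, w (b i) (b j) = Dr (2 * r) i j := by
  induction k using Nat.strong_induction_on with
  | _ k ih =>
  intro L _ _ _ w alt H hk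
  have skew : ∀ x y, w x y = - w y x := by
    intro x y
    have := alt (x + y)
    simp [alt] at this
    linarith
  by_cases hw : ∀ x y, w x y = 0
  · refine ⟨0, by omega, Module.finBasisOfFinrankEq ℤ L hk, ?_⟩
    intro i j
    simp [hw, Dr]
  · push Not at hw
    obtain ⟨x0, y0, h0⟩ := hw
    -- unimodular pair
    obtain ⟨x, y, hxy⟩ : ∃ x y, w x y = 1 := by
      obtain ⟨d, hd⟩ := (IsPrincipalIdealRing.principal (LinearMap.range (w x0) : Ideal ℤ)).principal
      have hd0 : d ≠ 0 := by
        rintro rfl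
        have : w x0 y0 ∈ LinearMap.range (w x0) := ⟨y0, rfl⟩
        rw [hd] at this
        simp at this
        exact h0 this
      obtain ⟨x', hx'⟩ := H d x0 hd0 (by
        intro y
        have : w x0 y ∈ LinearMap.range (w x0) := ⟨y, rfl⟩
        rw [hd] at this
        exact Ideal.mem_span_singleton.1 this)
      have : d ∈ LinearMap.range (w x0) := by
        rw [hd]; exact Ideal.mem_span_singleton_self d
      obtain ⟨y, hy⟩ := this
      refine ⟨x', y, ?_⟩
      have := hx' y
      rw [hy] at this
      have h2 : d * (w x' y - 1) = 0 := by linarith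
      rcases mul_eq_zero.1 h2 with h | h
      · exact absurd h hd0
      · linarith
    have hyx : w y x = -1 := by rw [skew, hxy]
    let N : Submodule ℤ L := LinearMap.ker (w x) ⊓ LinearMap.ker (w y)
    have hN : ∀ z ∈ N, w x z = 0 ∧ w y z = 0 := by
      intro z hz
      simpa [N] using hz
    have hproj : ∀ z, z - (- w y z) • x - (w x z) • y ∈ N := by
      intro z
      simp [N, alt, hxy, hyx]
    let g : (Fin 2 → ℤ) × N →ₗ[ℤ] L :=
      { toFun := fun p => p.1 0 • x + p.1 1 • y + (p.2 : L)
        map_add' := by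
          intro p q
          simp [add_smul]
          abel
        map_smul' := by
          intro c p
          simp [mul_smul] }
    have hg : ∀ p, g p = p.1 0 • x + p.1 1 • y + (p.2 : L) := fun _ => rfl
    have ginj : Function.Injective g := by
      rw [injective_iff_map_eq_zero]
      rintro ⟨p, z⟩ hp
      rw [hg] at hp
      obtain ⟨h1, h2⟩ := hN z z.2
      have e1 := congrArg (w x) hp
      have e2 := congrArg (w y) hp
      simp [alt, hxy, hyx, h1, h2] at e1 e2
      have : z = 0 := by
        apply Subtype.ext
        simpa [e1, e2] using hp
      subst this
      ext i
      · fin_cases i <;> simp [e1, e2]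
      · rfl
    have gsurj : Function.Surjective g := by
      intro z
      refine ⟨(![- w y z, w x z], ⟨_, hproj z⟩), ?_⟩
      rw [hg]
      simp
    let e := LinearEquiv.ofBijective g ⟨ginj, gsurj⟩
    have hfr : 2 + Module.finrank ℤ N = k := by
      rw [← hk, ← e.finrank_eq, Module.finrank_prod]
      simp
    obtain ⟨r, hr, b, hb⟩ := ih (Module.finrank ℤ N) (by omega) N
      ((w.domRestrict N).compl₂ N.subtype) (by intro z; simp [alt])
      (by
        intro d z hd hz
        obtain ⟨x', hx'⟩ := H d z hd (by
          intro u
          obtain ⟨⟨p, v⟩, rfl⟩ := gsurj u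
          rw [hg]
          have h1 := hN z z.2
          have h3 := skew z x
          have h4 := skew z y
          have := hz v
          simp at this
          simp [h3, h4, h1.1, h1.2, this])
        obtain ⟨⟨p, v⟩, rfl⟩ := gsurj x'
        refine ⟨v, ?_⟩
        intro u
        have := hx' u
        rw [hg] at this
        have h1 := hN u u.2
        simpa [h1.1, h1.2] using this) rfl
    subst hfr
    refine ⟨r + 1, by omega, (((Pi.basisFun ℤ (Fin 2)).prod b).map e).reindex finSumFinEquiv, ?_⟩
    have hbx : ∀ i, w x (b i) = 0 := fun i => (hN _ (b i).2).1
    have hby : ∀ i, w y (b i) = 0 := fun i => (hN _ (b i).2).2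
    have hbx' : ∀ i, w (b i) x = 0 := fun i => by rw [skew, hbx, neg_zero]
    have hby' : ∀ i, w (b i) y = 0 := fun i => by rw [skew, hby, neg_zero]
    have he : ∀ p, e p = p.1 0 • x + p.1 1 • y + (p.2 : L) := fun _ => rfl
    intro i j
    obtain ⟨i, rfl⟩ := finSumFinEquiv.surjective i
    obtain ⟨j, rfl⟩ := finSumFinEquiv.surjective j
    simp only [Module.Basis.reindex_apply, Equiv.symm_apply_apply, Module.Basis.map_apply, he]
    rcases i with i | i <;> rcases j with j | j
    · fin_cases i <;> fin_cases j <;> simp [Dr, alt, hxy, hyx] <;> omega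
    · fin_cases i <;> simp [Dr, hbx, hby] <;> grind
    · fin_cases j <;> simp [Dr, hbx', hby'] <;> grind
    · have := hb i j
      simp [Dr] at this ⊢
      rw [this]
      grind

def h1 (i j s t : ℕ) : ℤ :=
  if i < s ∧ j < t then -1 else if s < i ∧ t < j then 1 else 0

section
variable {R : Type} [CommRing R]

/-- partial sums -/
def FF (X : ℕ → ℕ → R) (i j : ℕ) : R := ∑ s ∈ Finset.range i, ∑ t ∈ Finset.range j, X s t

def EE (n : ℕ) (X : ℕ → ℕ → R) (i j : ℕ) : R :=
  ∑ s ∈ Finset.range n, ∑ t ∈ Finset.range n, X s t * (h1 s t i j : R)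

theorem FF_ind (n : ℕ) (X : ℕ → ℕ → R) (a b : ℕ) (ha : a ≤ n) (hb : b ≤ n) :
    ∑ s ∈ Finset.range n, ∑ t ∈ Finset.range n, (if s < a ∧ t < b then X s t else 0) = FF X a b := by
  unfold FF
  rw [← Finset.sum_subset (Finset.range_mono ha)]
  · refine Finset.sum_congr rfl fun s hs => ?_
    rw [← Finset.sum_subset (Finset.range_mono hb)]
    · refine Finset.sum_congr rfl fun t ht => ?_
      simp at hs ht
      simp [hs, ht]
    · intro t _ ht
      simp at ht
      simp; intros; omega
  · intro s _ hs
    simp at hs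
    refine Finset.sum_eq_zero fun t _ => ?_
    simp; intros; omega

theorem EE_eq (n : ℕ) (X : ℕ → ℕ → R) (i j : ℕ) (hi : i < n) (hj : j < n) :
    EE n X i j = FF X n n - FF X (i+1) n - FF X n (j+1) + FF X (i+1) (j+1) - FF X i j := by
  rw [← FF_ind n X n n le_rfl le_rfl, ← FF_ind n X (i+1) n hi le_rfl,
    ← FF_ind n X n (j+1) le_rfl hj, ← FF_ind n X (i+1) (j+1) hi hj,
    ← FF_ind n X i j hi.le hj.le]
  simp only [EE, ← Finset.sum_sub_distrib, ← Finset.sum_add_distrib]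
  refine Finset.sum_congr rfl fun s hs => Finset.sum_congr rfl fun t ht => ?_
  simp at hs ht
  unfold h1
  by_cases h1 : s < i <;> by_cases h2 : t < j <;> by_cases h3 : i < s <;> by_cases h4 : j < t <;>
    first
    | omega
    | (have h5 : (s < i + 1) ↔ ¬ i < s := by omega
       have h6 : (t < j + 1) ↔ ¬ j < t := by omega
       simp [h1, h2, h3, h4, hs, ht, h5, h6])

theorem FF_zero_left (X : ℕ → ℕ → R) (j : ℕ) : FF X 0 j = 0 := by simp [FF]
theorem FF_zero_right (X : ℕ → ℕ → R) (i : ℕ) : FF X i 0 = 0 := by simp [FF]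
theorem FF_diff (X : ℕ → ℕ → R) (i j : ℕ) :
    X i j = FF X (i+1) (j+1) - FF X i (j+1) - FF X (i+1) j + FF X i j := by
  simp only [FF, Finset.sum_range_succ]
  ring

theorem inj_lemma (n : ℕ) (X : ℕ → ℕ → R) (hE : ∀ i < n, ∀ j < n, EE n X i j = 0)
    (hc : ∀ j ≤ n, FF X n j = 0) : ∀ i < n, ∀ j < n, X i j = 0 := by
  have hrec : ∀ i < n, ∀ j < n, FF X (i+1) (j+1) = FF X i j + FF X (i+1) n := by
    intro i hi j hj
    have := hE i hi j hj
    rw [EE_eq n X i j hi hj, hc n le_rfl, hc (j+1) hj] at this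
    linear_combination this
  have hlast : ∀ j < n, FF X (n-1) j = 0 := by
    intro j hj
    have := hrec (n-1) (by omega) j hj
    rw [Nat.sub_add_cancel (by omega), hc _ le_rfl, hc _ hj] at this
    linear_combination -this
  have hsum : ∀ k i, i + k ≤ n → FF X (i+k) k = ∑ l ∈ Finset.range k, FF X (i+l+1) n := by
    intro k
    induction k with
    | zero => intro i _; simp [FF_zero_right]
    | succ k ih =>
      intro i h
      rw [Finset.sum_range_succ, ← ih i (by omega), ← add_assoc, hrec (i+k) (by omega) k (by omega)]
  have hr : ∀ k, k < n → FF X (n - k) n = 0 := by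
    intro k hk
    rcases Nat.eq_zero_or_pos k with rfl | hk0
    · exact hc n le_rfl
    · obtain ⟨m, rfl⟩ : ∃ m, k = m + 1 := ⟨k-1, by omega⟩
      have e1 := hsum (m+1) (n - 1 - (m+1)) (by omega)
      have e2 := hsum m (n - 1 - m) (by omega)
      rw [show n - 1 - (m+1) + (m+1) = n - 1 by omega, hlast _ hk, Finset.sum_range_succ'] at e1
      rw [show n - 1 - m + m = n - 1 by omega, hlast _ (by omega)] at e2
      have e3 : ∑ l ∈ Finset.range m, FF X (n - 1 - m + l + 1) n =
          ∑ l ∈ Finset.range m, FF X (n - 1 - (m + 1) + (l + 1) + 1) n := by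
        refine Finset.sum_congr rfl fun l _ => ?_
        congr 1; omega
      rw [show n - 1 - (m+1) + 0 + 1 = n - (m+1) by omega] at e1
      linear_combination e2 - e1 + e3
  have hr' : ∀ i ≤ n, FF X i n = 0 := by
    intro i hi
    rcases Nat.eq_zero_or_pos i with rfl | h
    · exact FF_zero_left X n
    · have := hr (n - i) (by omega)
      rwa [Nat.sub_sub_self hi] at this
  have hF : ∀ i ≤ n, ∀ j ≤ n, FF X i j = 0 := by
    intro i
    induction i with
    | zero => intros; exact FF_zero_left X _
    | succ i ih =>
      intro hi j hj
      cases j with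
      | zero => exact FF_zero_right X _
      | succ j => rw [hrec i hi j hj, ih (by omega) j (by omega), hr' _ hi, add_zero]
  intro i hi j hj
  rw [FF_diff X i j, hF _ hi _ hj, hF _ hi.le _ hj, hF _ hi _ hj.le, hF _ hi.le _ hj.le]
  ring

/-- explicit kernel element -/
def PP (g : ℕ → R) (m : ℕ) : R := ∑ l ∈ Finset.range m, g l

def GG (n : ℕ) (g : ℕ → R) (i j : ℕ) : R :=
  PP g (j+1) + PP g (n-i) - (if j ≤ i then PP g 1 + PP g (n-i+j) else PP g (j-i+1) + PP g n)

def KK (n : ℕ) (g : ℕ → R) (i j : ℕ) : R :=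
  GG n g (i+1) (j+1) - GG n g i (j+1) - GG n g (i+1) j + GG n g i j

theorem GG_left (n : ℕ) (g : ℕ → R) (j : ℕ) : GG n g 0 j = 0 := by
  unfold GG
  split_ifs with h
  · obtain rfl : j = 0 := by omega
    simp
  · simp

theorem GG_right (n : ℕ) (g : ℕ → R) (i : ℕ) : GG n g i 0 = 0 := by
  simp [GG]

theorem GG_n (n : ℕ) (g : ℕ → R) (j : ℕ) (hj : j ≤ n) : GG n g n j = g j - g 0 := by
  simp [GG, hj, PP, Finset.sum_range_succ]
  ring

theorem GG_n' (n : ℕ) (g : ℕ → R) (i : ℕ) (hi : i ≤ n) : GG n g i n = g n - g (n - i) := by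
  unfold GG
  split_ifs with h
  · obtain rfl : i = n := by omega
    simp [PP, Finset.sum_range_succ]; ring
  · simp [PP, Finset.sum_range_succ]; ring

theorem GG_rec (n : ℕ) (g : ℕ → R) (i j : ℕ) (hi : i < n) :
    GG n g (i+1) (j+1) = GG n g i j + g (j+1) - g (n-(i+1)) := by
  have e : n - i = (n - (i+1)) + 1 := by omega
  unfold GG
  split_ifs <;> try omega
  · rw [show n - (i+1) + (j+1) = n - i + j by omega, e]
    simp [PP, Finset.sum_range_succ]; ring
  · rw [show j + 1 - (i+1) = j - i by omega, e]
    simp [PP, Finset.sum_range_succ]; ring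

theorem FF_KK (n : ℕ) (g : ℕ → R) (i j : ℕ) : FF (KK n g) i j = GG n g i j := by
  have h : ∀ s, ∑ t ∈ Finset.range j, KK n g s t = GG n g (s+1) j - GG n g s j := by
    intro s
    have := Finset.sum_range_sub (fun t => GG n g (s+1) t - GG n g s t) j
    simp only [GG_right, sub_zero] at this
    rw [← this]
    refine Finset.sum_congr rfl fun t _ => ?_
    unfold KK; ring
  unfold FF
  simp only [h]
  rw [Finset.sum_range_sub (fun s => GG n g s j), GG_left, sub_zero]

theorem EE_KK (n : ℕ) (g : ℕ → R) (hg : g n = 0) (i j : ℕ) (hi : i < n) (hj : j < n) :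
    EE n (KK n g) i j = 0 := by
  rw [EE_eq n _ i j hi hj]
  simp only [FF_KK]
  rw [GG_rec n g i j hi, GG_n n g n le_rfl, GG_n n g (j+1) hj, GG_n' n g (i+1) hi, hg]
  ring

theorem EE_sub (n : ℕ) (X Y : ℕ → ℕ → R) (i j : ℕ) :
    EE n (fun s t => X s t - Y s t) i j = EE n X i j - EE n Y i j := by
  simp [EE, sub_mul, Finset.sum_sub_distrib]

theorem FF_sub (X Y : ℕ → ℕ → R) (i j : ℕ) :
    FF (fun s t => X s t - Y s t) i j = FF X i j - FF Y i j := by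
  simp [FF, Finset.sum_sub_distrib]

/-- the parameters of a matrix -/
def rr (n : ℕ) (X : ℕ → ℕ → R) (j : ℕ) : R := FF X n j - FF X n n

theorem key (n : ℕ) (X : ℕ → ℕ → ℤ) (d : ℤ) (hE : ∀ i < n, ∀ j < n, d ∣ EE n X i j) :
    ∀ i < n, ∀ j < n, d ∣ X i j - KK n (rr n X) i j := by
  have hg : rr n X n = 0 := by simp [rr]
  let Y : ℕ → ℕ → ℤ := fun i j => X i j - KK n (rr n X) i j
  let Z : ℕ → ℕ → ZMod d.natAbs := fun i j => (Y i j : ZMod d.natAbs)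
  have hdvd : ∀ a : ℤ, (a : ZMod d.natAbs) = 0 ↔ d ∣ a := by
    intro a
    rw [ZMod.intCast_zmod_eq_zero_iff_dvd, Int.natCast_natAbs, abs_dvd]
  have := inj_lemma n Z (by
    intro i hi j hj
    have : EE n Z i j = ((EE n Y i j : ℤ) : ZMod d.natAbs) := by
      simp [EE, Z]
    rw [this, hdvd, EE_sub, EE_KK n _ hg i j hi hj, sub_zero]
    exact hE i hi j hj) (by
    intro j hj
    have : FF Z n j = ((FF Y n j : ℤ) : ZMod d.natAbs) := by
      simp [FF, Z]
    rw [this, FF_sub, FF_KK, GG_n n _ j hj]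
    simp [rr, FF_zero_right])
  intro i hi j hj
  exact (hdvd _).1 (this i hi j hj)
end

section final
variable {n : ℕ}

def hat (x : Fin n × Fin n → ℤ) (i j : ℕ) : ℤ :=
  if h : i < n ∧ j < n then x (⟨i, h.1⟩, ⟨j, h.2⟩) else 0

def unhat (X : ℕ → ℕ → ℤ) : Fin n × Fin n → ℤ := fun p => X p.1 p.2

theorem hat_apply (x : Fin n × Fin n → ℤ) (i j : Fin n) : hat x i j = x (i, j) := by
  simp [hat]

theorem hat_unhat (X : ℕ → ℕ → ℤ) (i j : ℕ) (hi : i < n) (hj : j < n) :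
    hat (unhat (n := n) X) i j = X i j := by
  simp [hat, unhat, hi, hj]

def Hm (n : ℕ) : Matrix (Fin n × Fin n) (Fin n × Fin n) ℤ :=
  Matrix.of fun p q => h1 p.1 p.2 q.1 q.2

def ww (n : ℕ) : (Fin n × Fin n → ℤ) →ₗ[ℤ] (Fin n × Fin n → ℤ) →ₗ[ℤ] ℤ := Matrix.toBilin' (Hm n)

theorem EE_hat (x : Fin n × Fin n → ℤ) (i j : ℕ) :
    EE n (hat x) i j = ∑ p : Fin n × Fin n, x p * h1 p.1 p.2 i j := by
  unfold EE
  simp only [Int.cast_id]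
  rw [Fintype.sum_prod_type, ← Fin.sum_univ_eq_sum_range
    (fun s => ∑ t ∈ Finset.range n, hat x s t * h1 s t i j)]
  refine Finset.sum_congr rfl fun s _ => ?_
  rw [← Fin.sum_univ_eq_sum_range (fun t => hat x s t * h1 s t i j)]
  simp [hat_apply]

theorem ww_apply (x y : Fin n × Fin n → ℤ) :
    ww n x y = ∑ p, ∑ q, x p * h1 p.1 p.2 q.1 q.2 * y q := by
  unfold ww
  rw [Matrix.toBilin'_apply]
  rfl

theorem ww_eq (x y : Fin n × Fin n → ℤ) : ww n x y = ∑ q, EE n (hat x) q.1 q.2 * y q := by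
  rw [ww_apply, Finset.sum_comm]
  refine Finset.sum_congr rfl fun q _ => ?_
  rw [EE_hat, Finset.sum_mul]

theorem ww_single (x : Fin n × Fin n → ℤ) (q : Fin n × Fin n) :
    ww n x (Pi.single q 1) = EE n (hat x) q.1 q.2 := by
  rw [ww_eq, Finset.sum_eq_single q]
  · simp
  · intro b _ hb; simp [hb]
  · simp

theorem h1_skew (i j s t : ℕ) : h1 i j s t = - h1 s t i j := by
  unfold h1; split_ifs <;> omega

theorem ww_alt (x : Fin n × Fin n → ℤ) : ww n x x = 0 := by
  have : ww n x x = - ww n x x := by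
    conv_lhs => rw [ww_apply, Finset.sum_comm]
    rw [ww_apply, ← Finset.sum_neg_distrib]
    refine Finset.sum_congr rfl fun p _ => ?_
    rw [← Finset.sum_neg_distrib]
    refine Finset.sum_congr rfl fun q _ => ?_
    rw [h1_skew]; ring
  omega

theorem EE_congr (X Y : ℕ → ℕ → ℤ) (h : ∀ i < n, ∀ j < n, X i j = Y i j) (i j : ℕ) :
    EE n X i j = EE n Y i j := by
  unfold EE
  refine Finset.sum_congr rfl fun s hs => Finset.sum_congr rfl fun t ht => ?_
  rw [h s (Finset.mem_range.1 hs) t (Finset.mem_range.1 ht)]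

theorem FF_congr (X Y : ℕ → ℕ → ℤ) (h : ∀ i < n, ∀ j < n, X i j = Y i j) (i j : ℕ)
    (hi : i ≤ n) (hj : j ≤ n) : FF X i j = FF Y i j := by
  unfold FF
  refine Finset.sum_congr rfl fun s hs => Finset.sum_congr rfl fun t ht => ?_
  have := Finset.mem_range.1 hs
  have := Finset.mem_range.1 ht
  rw [h s (by omega) t (by omega)]

theorem unhat_KK_ker (g : ℕ → ℤ) (hg : g n = 0) : ww n (unhat (KK n g)) = 0 := by
  refine LinearMap.ext fun y => ?_
  rw [ww_eq, LinearMap.zero_apply]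
  refine Finset.sum_eq_zero fun q _ => ?_
  rw [EE_congr _ (KK n g) (fun i hi j hj => hat_unhat _ i j hi hj),
    EE_KK n g hg _ _ q.1.2 q.2.2, zero_mul]

theorem ww_H (d : ℤ) (x : Fin n × Fin n → ℤ) (hd : ∀ y, d ∣ ww n x y) :
    ∃ x', ∀ y, ww n x y = d * ww n x' y := by
  have hk := key n (hat x) d (by
    intro i hi j hj
    have := hd (Pi.single (⟨i, hi⟩, ⟨j, hj⟩) 1)
    rwa [ww_single] at this)
  have : ∀ p : Fin n × Fin n, ∃ c, x p - unhat (KK n (rr n (hat x))) p = d * c := by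
    intro p
    obtain ⟨c, hc⟩ := hk p.1 p.1.2 p.2 p.2.2
    rw [hat_apply] at hc
    exact ⟨c, hc⟩
  choose c hc using this
  refine ⟨c, fun y => ?_⟩
  have hx : x = unhat (KK n (rr n (hat x))) + d • c := by
    ext p
    have := hc p
    simp only [Pi.add_apply, Pi.smul_apply, smul_eq_mul]
    linarith
  conv_lhs => rw [hx]
  rw [map_add, unhat_KK_ker _ (by simp [rr]), zero_add, map_smul]
  simp

def rho (n : ℕ) : (Fin n × Fin n → ℤ) →ₗ[ℤ] (Fin n → ℤ) where
  toFun x j := rr n (hat x) j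
  map_add' x y := by
    ext j
    have : hat (x + y) = fun s t => hat x s t + hat y s t := by
      ext s t; unfold hat; split_ifs <;> simp
    simp only [rr, this, FF, Finset.sum_add_distrib, Pi.add_apply]
    ring
  map_smul' c x := by
    ext j
    have : hat (c • x) = fun s t => c * hat x s t := by
      ext s t; unfold hat; split_ifs <;> simp
    simp only [rr, this, FF, ← Finset.mul_sum, Pi.smul_apply, smul_eq_mul, RingHom.id_apply]
    ring

theorem finrank_ker (n : ℕ) : Module.finrank ℤ (LinearMap.ker (ww n)) = n := by
  have hb : Function.Bijective ((rho n).domRestrict (LinearMap.ker (ww n))) := by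
    constructor
    · rw [injective_iff_map_eq_zero]
      rintro ⟨x, hx⟩ h
      have hr : ∀ j ≤ n, rr n (hat x) j = 0 := by
        intro j hj
        rcases hj.lt_or_eq with hj | rfl
        · exact congrFun h ⟨j, hj⟩
        · simp [rr]
      have hx' : ww n x = 0 := hx
      have := inj_lemma n (hat x) (by
        intro i hi j hj
        have := ww_single x (⟨i, hi⟩, ⟨j, hj⟩)
        rw [hx'] at this
        exact this.symm) (by
        intro j hj
        have e1 := hr j hj
        have e2 := hr 0 (Nat.zero_le _)
        simp only [rr, FF_zero_right] at e1 e2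
        linarith)
      apply Subtype.ext
      ext p
      have := this p.1 p.1.2 p.2 p.2.2
      rwa [hat_apply] at this
    · intro g
      let g' : ℕ → ℤ := fun j => if h : j < n then g ⟨j, h⟩ else 0
      have hg' : g' n = 0 := by simp [g']
      refine ⟨⟨unhat (KK n g'), unhat_KK_ker g' hg'⟩, ?_⟩
      ext j
      change rr n (hat (unhat (KK n g'))) j = g j
      unfold rr
      rw [FF_congr _ (KK n g') (fun i hi j hj => hat_unhat _ i j hi hj) _ _ le_rfl j.2.le,
        FF_congr _ (KK n g') (fun i hi j hj => hat_unhat _ i j hi hj) _ _ le_rfl le_rfl,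
        FF_KK, FF_KK, GG_n n g' j j.2.le, GG_n n g' n le_rfl, hg']
      simp [g']
  rw [(LinearEquiv.ofBijective _ hb).finrank_eq]
  simp

theorem finrank_ker_Dr {L : Type} [AddCommGroup L] [Module.Free ℤ L] [Module.Finite ℤ L]
    (w : L →ₗ[ℤ] L →ₗ[ℤ] ℤ) (N r : ℕ) (hr : 2 * r ≤ N) (b : Module.Basis (Fin N) ℤ L)
    (hb : ∀ i j, w (b i) (b j) = Dr (2 * r) i j) :
    Module.finrank ℤ (LinearMap.ker w) + 2 * r = N := by
  have hker : LinearMap.ker w = Submodule.span ℤ (Set.range (fun i : Fin (N - 2 * r) =>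
      b ⟨2 * r + i, by omega⟩)) := by
    apply le_antisymm
    · intro x hx
      have hx : w x = 0 := hx
      have hs : ∀ k : Fin N, ∑ j, b.repr x j * Dr (2 * r) j k = 0 := by
        intro k
        have := congrArg (fun f => f (b k)) hx
        rw [← b.sum_repr x] at this
        simp only [map_sum, map_smul, LinearMap.sum_apply, LinearMap.smul_apply, hb,
          smul_eq_mul, LinearMap.zero_apply] at this
        exact this
      have hz : ∀ i : Fin N, (i : ℕ) < 2 * r → b.repr x i = 0 := by
        intro i hi
        rcases Nat.mod_two_eq_zero_or_one i with h | h
        · have := hs ⟨i + 1, by omega⟩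
          rw [Finset.sum_eq_single i] at this
          · have h2 : Dr (2 * r) i (i + 1) = 1 := by
              unfold Dr; rw [if_pos]; omega
            simpa [h2] using this
          · intro j _ hj
            have : (j : ℕ) ≠ i := fun h => hj (Fin.ext h)
            have h2 : Dr (2 * r) j (i + 1) = 0 := by
              unfold Dr; rw [if_neg, if_neg] <;> omega
            simp [h2]
          · simp
        · have := hs ⟨i - 1, by omega⟩
          rw [Finset.sum_eq_single i] at this
          · have h2 : Dr (2 * r) i (i - 1) = -1 := by
              unfold Dr; rw [if_neg, if_pos] <;> omega
            simpa [h2] using this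
          · intro j _ hj
            have : (j : ℕ) ≠ i := fun h => hj (Fin.ext h)
            have h2 : Dr (2 * r) j (i - 1) = 0 := by
              unfold Dr; rw [if_neg, if_neg] <;> omega
            simp [h2]
          · simp
      rw [← b.sum_repr x]
      refine Submodule.sum_mem _ fun i _ => ?_
      by_cases hi : (i : ℕ) < 2 * r
      · rw [hz i hi, zero_smul]; exact Submodule.zero_mem _
      · refine Submodule.smul_mem _ _ (Submodule.subset_span ⟨⟨i - 2 * r, by omega⟩, ?_⟩)
        have : (⟨2 * r + (i - 2 * r), by omega⟩ : Fin N) = i := Fin.ext (by simp; omega)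
        exact congrArg b this
    · rw [Submodule.span_le]
      rintro _ ⟨i, rfl⟩
      change w _ = 0
      apply b.ext
      intro j
      rw [hb]
      simp only [Dr, LinearMap.zero_apply]
      rw [if_neg, if_neg] <;> omega
  rw [hker, finrank_span_eq_card]
  · simp; omega
  · refine b.linearIndependent.comp (fun i : Fin (N - 2 * r) => (⟨2 * r + i, by omega⟩ : Fin N)) ?_
    intro i j h
    simp at h
    exact Fin.ext h

def eq2 (n : ℕ) : Fin n × Fin n ≃ Fin (n ^ 2) := finProdFinEquiv.trans (finCongr (sq n).symm)

theorem Mz_eq (n : ℕ) (p q : Fin n × Fin n) :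
    Mz n (eq2 n p) (eq2 n q) = 2 * h1 p.1 p.2 q.1 q.2 := by
  have h1' : ∀ p : Fin n × Fin n, ((eq2 n p : Fin (n ^ 2)) : ℕ) / n = p.1 := by
    intro p
    have : 0 < n := p.1.pos
    simp [eq2, finProdFinEquiv, Nat.add_mul_div_left _ _ this]
  have h2' : ∀ p : Fin n × Fin n, ((eq2 n p : Fin (n ^ 2)) : ℕ) % n = p.2 := by
    intro p
    simp [eq2, finProdFinEquiv, Nat.mod_eq_of_lt]
  simp only [Mz, Matrix.of_apply, h1', h2', hz, h1]
  split_ifs <;> rfl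

end final

theorem stmt6 (n : ℕ) (hn : 2 ≤ n) :
    ∃ W : Matrix.SpecialLinearGroup (Fin (n ^ 2)) ℤ,
      (W : Matrix (Fin (n ^ 2)) (Fin (n ^ 2)) ℤ) * Mz n *
          (W : Matrix (Fin (n ^ 2)) (Fin (n ^ 2)) ℤ)ᵀ =
        Dz n := by
  obtain ⟨r, hr, b, hb⟩ := symp (n ^ 2) (Fin n × Fin n → ℤ) (ww n) ww_alt
    (fun d x _ h => ww_H d x h) (by simp [sq])
  have hrank := finrank_ker_Dr (ww n) (n ^ 2) r hr b hb
  rw [finrank_ker] at hrank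
  let W0 : Matrix (Fin (n ^ 2)) (Fin (n ^ 2)) ℤ := Matrix.of fun a c => b a ((eq2 n).symm c)
  have hW0 : W0 * Mz n * W0ᵀ = Dz n := by
    ext a c
    have h2 : Dz n a c = 2 * Dr (2 * r) a c := by
      simp only [Dz, Dr, Matrix.of_apply]
      rw [show n ^ 2 - n = 2 * r by omega]
      split_ifs <;> rfl
    rw [h2, ← hb, ww_apply, Matrix.mul_apply, ← (eq2 n).sum_comp, Finset.sum_comm, Finset.mul_sum]
    refine Finset.sum_congr rfl fun q _ => ?_
    rw [Matrix.mul_apply, ← (eq2 n).sum_comp, Finset.sum_mul, Finset.mul_sum]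
    refine Finset.sum_congr rfl fun p _ => ?_
    rw [Mz_eq]
    simp [W0]
    ring
  have hdet : IsUnit W0.det := by
    have h := (Pi.basisFun ℤ (Fin (n ^ 2))).isUnit_det
      (b.map (LinearEquiv.funCongrLeft ℤ ℤ (eq2 n).symm))
    rw [Module.Basis.det_apply, ← Matrix.det_transpose] at h
    exact h
  have hsq : W0.det * W0.det = 1 := Int.isUnit_mul_self hdet
  have hnn : n < n ^ 2 := by nlinarith
  let l : Fin (n ^ 2) := ⟨n ^ 2 - 1, by omega⟩
  let ε : Fin (n ^ 2) → ℤ := fun a => if a = l then W0.det else 1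
  refine ⟨⟨Matrix.diagonal ε * W0, ?_⟩, ?_⟩
  · rw [Matrix.det_mul, Matrix.det_diagonal]
    simp [ε, hsq]
  · change Matrix.diagonal ε * W0 * Mz n * (Matrix.diagonal ε * W0)ᵀ = Dz n
    rw [Matrix.transpose_mul, Matrix.diagonal_transpose,
      show Matrix.diagonal ε * W0 * Mz n * (W0ᵀ * Matrix.diagonal ε) =
        Matrix.diagonal ε * (W0 * Mz n * W0ᵀ) * Matrix.diagonal ε by
        simp only [Matrix.mul_assoc], hW0]
    ext a c
    rw [Matrix.mul_diagonal, Matrix.diagonal_mul]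
    by_cases ha : (a : ℕ) = n ^ 2 - 1
    · have : Dz n a c = 0 := by
        simp only [Dz, Matrix.of_apply]
        have := c.2
        rw [if_neg, if_neg] <;> omega
      simp [this]
    · by_cases hc : (c : ℕ) = n ^ 2 - 1
      · have : Dz n a c = 0 := by
          simp only [Dz, Matrix.of_apply]
          have := a.2
          rw [if_neg, if_neg] <;> omega
        simp [this]
      · have ha' : a ≠ l := fun h => ha (congrArg Fin.val h)
        have hc' : c ≠ l := fun h => hc (congrArg Fin.val h)
        simp [ε, ha', hc']
end
end

section
/- Let q ∈ ℂ, q ≠ 0, and let A_2 be the quantum plane, the ℂ-algebra with generators x, y and relation yx = qxy. Then there is an injective homomorphism of unital ℂ-algebras φ : J^0_q(n) → A_2 ⊗_ℂ J^z_q(n) with φ(J_{i,j}) = x^{i+j}y ⊗ M_{i,j} for all 1 ≤ i,j ≤ n; in other words, the elements x^{i+j}y ⊗ M_{i,j} of A_2 ⊗ J^z_q(n) generate a subalgebra isomorphic to J^0_q(n) via J_{i,j} ↦ x^{i+j}y ⊗ M_{i,j}. -/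
noncomputable section

/-- The defining relations of `J^0_q(n)`:
`J_{i,j} J_{s,t} = q^{s+t-i-j} J_{s,t} J_{i,j}` whenever `(s-i)(t-j) ≤ 0`, and
`q^{1-t+j} J_{i,j} J_{s,t} = q^{s-i-1} J_{s,t} J_{i,j} + (q-q⁻¹) J_{i,t} J_{s,j}`
whenever `s > i` and `t > j` (0-based indices; all index differences agree with 1-based ones). -/
inductive J0Rel (n : ℕ) (q : ℂ) :
    FreeAlgebra ℂ (Fin n × Fin n) → FreeAlgebra ℂ (Fin n × Fin n) → Prop
  | comm (i j s t : Fin n)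
      (h : (((s : ℕ) : ℤ) - ((i : ℕ) : ℤ)) * (((t : ℕ) : ℤ) - ((j : ℕ) : ℤ)) ≤ 0) :
      J0Rel n q (FreeAlgebra.ι ℂ (i, j) * FreeAlgebra.ι ℂ (s, t))
        (q ^ (((s : ℕ) : ℤ) + ((t : ℕ) : ℤ) - ((i : ℕ) : ℤ) - ((j : ℕ) : ℤ)) •
          (FreeAlgebra.ι ℂ (s, t) * FreeAlgebra.ι ℂ (i, j)))
  | cross (i j s t : Fin n) (hs : i < s) (ht : j < t) :
      J0Rel n q
        (q ^ ((1 : ℤ) - ((t : ℕ) : ℤ) + ((j : ℕ) : ℤ)) •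
          (FreeAlgebra.ι ℂ (i, j) * FreeAlgebra.ι ℂ (s, t)))
        (q ^ (((s : ℕ) : ℤ) - ((i : ℕ) : ℤ) - 1) •
            (FreeAlgebra.ι ℂ (s, t) * FreeAlgebra.ι ℂ (i, j)) +
          (q - q⁻¹) • (FreeAlgebra.ι ℂ (i, t) * FreeAlgebra.ι ℂ (s, j)))

/-- The algebra `J^0_q(n)`. -/
abbrev J0Alg (n : ℕ) (q : ℂ) := RingQuot (J0Rel n q)

/-- The generator `J_{i,j}` (0-based indices). -/
def jgen (n : ℕ) (q : ℂ) (i j : Fin n) : J0Alg n q :=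
  RingQuot.mkAlgHom ℂ (J0Rel n q) (FreeAlgebra.ι ℂ (i, j))

/-- The defining relations of `J^z_q(n)`:
`M_{i,j} M_{s,t} = M_{s,t} M_{i,j}` whenever `(s-i)(t-j) ≤ 0`, and
`q M_{i,j} M_{s,t} = q⁻¹ M_{s,t} M_{i,j} + (q-q⁻¹) M_{i,t} M_{s,j}` whenever `i < s`, `j < t`. -/
inductive JzRel (n : ℕ) (q : ℂ) :
    FreeAlgebra ℂ (Fin n × Fin n) → FreeAlgebra ℂ (Fin n × Fin n) → Prop
  | comm (i j s t : Fin n)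
      (h : (((s : ℕ) : ℤ) - ((i : ℕ) : ℤ)) * (((t : ℕ) : ℤ) - ((j : ℕ) : ℤ)) ≤ 0) :
      JzRel n q (FreeAlgebra.ι ℂ (i, j) * FreeAlgebra.ι ℂ (s, t))
        (FreeAlgebra.ι ℂ (s, t) * FreeAlgebra.ι ℂ (i, j))
  | cross (i j s t : Fin n) (hs : i < s) (ht : j < t) :
      JzRel n q (q • (FreeAlgebra.ι ℂ (i, j) * FreeAlgebra.ι ℂ (s, t)))
        (q⁻¹ • (FreeAlgebra.ι ℂ (s, t) * FreeAlgebra.ι ℂ (i, j)) +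
          (q - q⁻¹) • (FreeAlgebra.ι ℂ (i, t) * FreeAlgebra.ι ℂ (s, j)))

/-- The algebra `J^z_q(n)`. -/
abbrev JzAlg (n : ℕ) (q : ℂ) := RingQuot (JzRel n q)

/-- The generator `M_{i,j}` (0-based indices). -/
def mgen (n : ℕ) (q : ℂ) (i j : Fin n) : JzAlg n q :=
  RingQuot.mkAlgHom ℂ (JzRel n q) (FreeAlgebra.ι ℂ (i, j))

/-- The defining relation of the quantum plane `A_2`: `y x = q x y`. -/
inductive PlaneRel (q : ℂ) : FreeAlgebra ℂ (Fin 2) → FreeAlgebra ℂ (Fin 2) → Prop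
  | rel : PlaneRel q (FreeAlgebra.ι ℂ 1 * FreeAlgebra.ι ℂ 0)
      (q • (FreeAlgebra.ι ℂ 0 * FreeAlgebra.ι ℂ 1))

/-- The quantum plane `A_2`. -/
abbrev QPlane (q : ℂ) := RingQuot (PlaneRel q)

/-- The generator `x` of the quantum plane. -/
def qpx (q : ℂ) : QPlane q := RingQuot.mkAlgHom ℂ (PlaneRel q) (FreeAlgebra.ι ℂ 0)

/-- The generator `y` of the quantum plane. -/
def qpy (q : ℂ) : QPlane q := RingQuot.mkAlgHom ℂ (PlaneRel q) (FreeAlgebra.ι ℂ 1)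

open scoped TensorProduct

theorem ringQuot_free_ind {X : Type} {r : FreeAlgebra ℂ X → FreeAlgebra ℂ X → Prop}
    {C : RingQuot r → Prop} (hc : ∀ c : ℂ, C (algebraMap ℂ _ c))
    (hg : ∀ x, C (RingQuot.mkAlgHom ℂ r (FreeAlgebra.ι ℂ x)))
    (hm : ∀ a b, C a → C b → C (a * b)) (ha : ∀ a b, C a → C b → C (a + b))
    (a : RingQuot r) : C a := by
  obtain ⟨a, rfl⟩ := RingQuot.mkAlgHom_surjective ℂ r a
  induction a using FreeAlgebra.induction with
  | grade0 c => rw [AlgHom.commutes]; exact hc c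
  | grade1 x => exact hg x
  | mul a b h1 h2 => rw [map_mul]; exact hm _ _ h1 h2
  | add a b h1 h2 => rw [map_add]; exact ha _ _ h1 h2

theorem ringQuot_commute {X E : Type} [Semiring E] [Algebra ℂ E]
    {r : FreeAlgebra ℂ X → FreeAlgebra ℂ X → Prop} (f : RingQuot r →ₐ[ℂ] E) (e : E)
    (h : ∀ x, Commute (f (RingQuot.mkAlgHom ℂ r (FreeAlgebra.ι ℂ x))) e) (a : RingQuot r) :
    Commute (f a) e := by
  induction a using ringQuot_free_ind with
  | hc c => rw [AlgHom.commutes]; exact Algebra.commutes c e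
  | hg x => exact h x
  | hm a b h1 h2 => rw [map_mul]; exact h1.mul_left h2
  | ha a b h1 h2 => rw [map_add]; exact h1.add_left h2

theorem qp_rel (q : ℂ) : qpy q * qpx q = q • (qpx q * qpy q) := by
  have := RingQuot.mkAlgHom_rel ℂ (PlaneRel.rel (q := q))
  simpa [qpx, qpy] using this

theorem qp_rel_pow (q : ℂ) (b : ℕ) : qpy q * qpx q ^ b = q ^ b • (qpx q ^ b * qpy q) := by
  induction b with
  | zero => simp
  | succ b ih =>
    rw [pow_succ, ← mul_assoc, ih, smul_mul_assoc, mul_assoc, qp_rel, mul_smul_comm, smul_smul,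
      ← pow_succ, mul_assoc]

theorem qp_mul (q : ℂ) (a b : ℕ) : (qpx q ^ a * qpy q) * (qpx q ^ b * qpy q) =
    q ^ b • (qpx q ^ (a + b) * (qpy q * qpy q)) := by
  rw [mul_assoc, ← mul_assoc (qpy q), qp_rel_pow, smul_mul_assoc, mul_smul_comm, pow_add]
  simp only [mul_assoc]

theorem mgen_comm (n : ℕ) (q : ℂ) (i j s t : Fin n)
      (h : (((s : ℕ) : ℤ) - ((i : ℕ) : ℤ)) * (((t : ℕ) : ℤ) - ((j : ℕ) : ℤ)) ≤ 0) :
    mgen n q i j * mgen n q s t = mgen n q s t * mgen n q i j := by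
  have := RingQuot.mkAlgHom_rel ℂ (JzRel.comm (q := q) i j s t h)
  simpa [mgen] using this

theorem mgen_cross (n : ℕ) (q : ℂ) (i j s t : Fin n) (hs : i < s) (ht : j < t) :
    q • (mgen n q i j * mgen n q s t) = q⁻¹ • (mgen n q s t * mgen n q i j) +
      (q - q⁻¹) • (mgen n q i t * mgen n q s j) := by
  have := RingQuot.mkAlgHom_rel ℂ (JzRel.cross (q := q) i j s t hs ht)
  simpa only [mgen, map_mul, map_smul, map_add] using this

theorem jgen_comm (n : ℕ) (q : ℂ) (i j s t : Fin n)
      (h : (((s : ℕ) : ℤ) - ((i : ℕ) : ℤ)) * (((t : ℕ) : ℤ) - ((j : ℕ) : ℤ)) ≤ 0) :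
    jgen n q i j * jgen n q s t =
      q ^ (((s : ℕ) : ℤ) + ((t : ℕ) : ℤ) - ((i : ℕ) : ℤ) - ((j : ℕ) : ℤ)) •
       (jgen n q s t * jgen n q i j) := by
  have := RingQuot.mkAlgHom_rel ℂ (J0Rel.comm (q := q) i j s t h)
  simpa only [jgen, map_mul, map_smul, map_add] using this

theorem jgen_cross (n : ℕ) (q : ℂ) (i j s t : Fin n) (hs : i < s) (ht : j < t) :
    q ^ ((1 : ℤ) - ((t : ℕ) : ℤ) + ((j : ℕ) : ℤ)) • (jgen n q i j * jgen n q s t) =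
    q ^ (((s : ℕ) : ℤ) - ((i : ℕ) : ℤ) - 1) • (jgen n q s t * jgen n q i j) +
      (q - q⁻¹) • (jgen n q i t * jgen n q s j) := by
  have := RingQuot.mkAlgHom_rel ℂ (J0Rel.cross (q := q) i j s t hs ht)
  simpa only [jgen, map_mul, map_smul, map_add] using this

/-- The map `φ`. -/
def phiMap (n : ℕ) (q : ℂ) (hq : q ≠ 0) : J0Alg n q →ₐ[ℂ] (QPlane q ⊗[ℂ] JzAlg n q) :=
  RingQuot.liftAlgHom ℂ ⟨FreeAlgebra.lift ℂ fun p : Fin n × Fin n =>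
    (qpx q ^ ((p.1 : ℕ) + (p.2 : ℕ) + 2) * qpy q) ⊗ₜ[ℂ] mgen n q p.1 p.2, by
    intro a b h
    induction h with
    | comm i j s t h =>
      simp only [map_mul, map_smul, FreeAlgebra.lift_ι_apply, Algebra.TensorProduct.tmul_mul_tmul,
        qp_mul, mgen_comm n q i j s t h, ← TensorProduct.smul_tmul', smul_smul]
      rw [add_comm ((s : ℕ) + (t : ℕ) + 2)]
      congr 1
      rw [← zpow_natCast, ← zpow_natCast, ← zpow_add₀ hq]
      congr 1
      push_cast
      ring
    | cross i j s t hs ht =>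
      simp only [map_mul, map_smul, map_add, FreeAlgebra.lift_ι_apply,
        Algebra.TensorProduct.tmul_mul_tmul,
        qp_mul, ← TensorProduct.smul_tmul', smul_smul]
      rw [show (s : ℕ) + (t : ℕ) + 2 + ((i : ℕ) + (j : ℕ) + 2) =
        (i : ℕ) + (j : ℕ) + 2 + ((s : ℕ) + (t : ℕ) + 2) by ring,
        show (i : ℕ) + (t : ℕ) + 2 + ((s : ℕ) + (j : ℕ) + 2) =
        (i : ℕ) + (j : ℕ) + 2 + ((s : ℕ) + (t : ℕ) + 2) by ring]
      have e1 : q ^ ((1 : ℤ) - ((t : ℕ) : ℤ) + ((j : ℕ) : ℤ)) * q ^ ((s : ℕ) + (t : ℕ) + 2) =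
          q ^ ((s : ℕ) + (j : ℕ) + 2) * q := by
        rw [← pow_succ, ← zpow_natCast, ← zpow_natCast, ← zpow_add₀ hq]
        congr 1
        push_cast
        ring
      have e2 : q ^ (((s : ℕ) : ℤ) - ((i : ℕ) : ℤ) - 1) * q ^ ((i : ℕ) + (j : ℕ) + 2) =
          q ^ ((s : ℕ) + (j : ℕ) + 2) * q⁻¹ := by
        rw [← zpow_neg_one, ← zpow_natCast, ← zpow_natCast, ← zpow_add₀ hq, ← zpow_add₀ hq]
        congr 1
        push_cast
        ring
      rw [e1, e2, mul_comm (q - q⁻¹)]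
      simp only [mul_smul, ← smul_add, ← TensorProduct.tmul_smul, ← TensorProduct.tmul_add]
      rw [mgen_cross n q i j s t hs ht]⟩

theorem phiMap_jgen (n : ℕ) (q : ℂ) (hq : q ≠ 0) (i j : Fin n) :
    phiMap n q hq (jgen n q i j) =
      (qpx q ^ ((i : ℕ) + (j : ℕ) + 2) * qpy q) ⊗ₜ[ℂ] mgen n q i j := by
  simp [phiMap, jgen]

/-- The representation space. -/
abbrev RepW (n : ℕ) (q : ℂ) := ℤ × ℤ → J0Alg n q

/-- The operator of `x`. -/
def opX (n : ℕ) (q : ℂ) : Module.End ℂ (RepW n q) where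
  toFun f := fun p => f (p.1 - 1, p.2)
  map_add' _ _ := rfl
  map_smul' _ _ := rfl

/-- The operator of `y`. -/
def opY (n : ℕ) (q : ℂ) : Module.End ℂ (RepW n q) where
  toFun f := fun p => q ^ p.1 • f p
  map_add' f g := by ext p; simp
  map_smul' c f := by
    funext p
    simp only [Pi.smul_apply, RingHom.id_apply]
    rw [smul_comm]

/-- The operator of `M_{i,j}`. -/
def opM (n : ℕ) (q : ℂ) (i j : Fin n) : Module.End ℂ (RepW n q) where
  toFun f := fun p => q ^ (((i : ℕ) : ℤ) + ((j : ℕ) : ℤ) + 2 - p.2) •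
    (jgen n q i j * f (p.1, p.2 - (((i : ℕ) : ℤ) + ((j : ℕ) : ℤ) + 2)))
  map_add' f g := by funext p; simp only [Pi.add_apply, mul_add, smul_add]
  map_smul' c f := by
    funext p
    simp only [Pi.smul_apply, RingHom.id_apply]
    rw [mul_smul_comm, smul_comm]

theorem opX_pow (n : ℕ) (q : ℂ) (a : ℕ) (f : RepW n q) (p : ℤ × ℤ) :
    (opX n q ^ a) f p = f (p.1 - a, p.2) := by
  induction a generalizing p with
  | zero => simp
  | succ a ih =>
    rw [pow_succ', Module.End.mul_apply]
    change (opX n q ^ a) f (p.1 - 1, p.2) = _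
    rw [ih]
    congr 2
    push_cast
    ring

theorem opM_mul (n : ℕ) (q : ℂ) (hq : q ≠ 0) (i j s t : Fin n) (f : RepW n q) (p : ℤ × ℤ) :
    (opM n q i j * opM n q s t) f p =
      q ^ (2 * (((i : ℕ) : ℤ) + ((j : ℕ) : ℤ) + 2) + (((s : ℕ) : ℤ) + ((t : ℕ) : ℤ) + 2)
        - 2 * p.2) •
      ((jgen n q i j * jgen n q s t) *
        f (p.1, p.2 - (((i : ℕ) : ℤ) + ((j : ℕ) : ℤ) + ((s : ℕ) : ℤ) + ((t : ℕ) : ℤ) + 4))) := by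
  rw [Module.End.mul_apply]
  simp only [opM, LinearMap.coe_mk, AddHom.coe_mk]
  rw [mul_smul_comm, smul_smul, ← zpow_add₀ hq, mul_assoc]
  congr 2
  · ring
  · congr 3
    ring

/-- The representation of the quantum plane. -/
def repA (n : ℕ) (q : ℂ) (hq : q ≠ 0) : QPlane q →ₐ[ℂ] Module.End ℂ (RepW n q) :=
  RingQuot.liftAlgHom ℂ ⟨FreeAlgebra.lift ℂ ![opX n q, opY n q], by
    intro a b h
    induction h with
    | rel =>
      simp only [map_mul, map_smul, FreeAlgebra.lift_ι_apply, Matrix.cons_val_zero,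
        Matrix.cons_val_one]
      refine LinearMap.ext fun f => funext fun p => ?_
      change q ^ p.1 • f (p.1 - 1, p.2) = q • q ^ (p.1 - 1) • f (p.1 - 1, p.2)
      rw [smul_smul, ← zpow_one_add₀ hq]
      congr 2
      ring⟩

/-- The representation of `J^z`. -/
def repM (n : ℕ) (q : ℂ) (hq : q ≠ 0) : JzAlg n q →ₐ[ℂ] Module.End ℂ (RepW n q) :=
  RingQuot.liftAlgHom ℂ ⟨FreeAlgebra.lift ℂ fun p : Fin n × Fin n => opM n q p.1 p.2, by
    intro a b h
    induction h with
    | comm i j s t h =>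
      simp only [map_mul, map_smul, FreeAlgebra.lift_ι_apply]
      refine LinearMap.ext fun f => funext fun p => ?_
      rw [opM_mul n q hq, opM_mul n q hq, jgen_comm n q i j s t h, smul_mul_assoc, smul_smul,
        ← zpow_add₀ hq]
      congr 2
      · ring
      · congr 3
        ring
    | cross i j s t hs ht =>
      simp only [map_mul, map_smul, map_add, FreeAlgebra.lift_ι_apply]
      refine LinearMap.ext fun f => funext fun p => ?_
      simp only [LinearMap.smul_apply, LinearMap.add_apply, Pi.add_apply, Pi.smul_apply]
      rw [opM_mul n q hq, opM_mul n q hq, opM_mul n q hq]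
      have key := jgen_cross n q i j s t hs ht
      have e1 : p.2 - (((s : ℕ) : ℤ) + ((t : ℕ) : ℤ) + ((i : ℕ) : ℤ) + ((j : ℕ) : ℤ) + 4) =
        p.2 - (((i : ℕ) : ℤ) + ((j : ℕ) : ℤ) + ((s : ℕ) : ℤ) + ((t : ℕ) : ℤ) + 4) := by ring
      have e2 : p.2 - (((i : ℕ) : ℤ) + ((t : ℕ) : ℤ) + ((s : ℕ) : ℤ) + ((j : ℕ) : ℤ) + 4) =
        p.2 - (((i : ℕ) : ℤ) + ((j : ℕ) : ℤ) + ((s : ℕ) : ℤ) + ((t : ℕ) : ℤ) + 4) := by ring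
      rw [e1, e2]
      generalize f (p.1, p.2 - (((i : ℕ) : ℤ) + ((j : ℕ) : ℤ) + ((s : ℕ) : ℤ) +
        ((t : ℕ) : ℤ) + 4)) = w
      generalize hc : 2 * (((i : ℕ) : ℤ) + ((t : ℕ) : ℤ) + 2) +
        (((s : ℕ) : ℤ) + ((j : ℕ) : ℤ) + 2) - 2 * p.2 = c
      have h1 : q • q ^ (2 * (((i : ℕ) : ℤ) + ((j : ℕ) : ℤ) + 2) +
          (((s : ℕ) : ℤ) + ((t : ℕ) : ℤ) + 2) - 2 * p.2) =
          q ^ c * q ^ ((1 : ℤ) - ((t : ℕ) : ℤ) + ((j : ℕ) : ℤ)) := by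
        rw [smul_eq_mul, ← zpow_one_add₀ hq, ← zpow_add₀ hq, ← hc]
        congr 1
        ring
      have h2 : q⁻¹ • q ^ (2 * (((s : ℕ) : ℤ) + ((t : ℕ) : ℤ) + 2) +
          (((i : ℕ) : ℤ) + ((j : ℕ) : ℤ) + 2) - 2 * p.2) =
          q ^ c * q ^ (((s : ℕ) : ℤ) - ((i : ℕ) : ℤ) - 1) := by
        rw [smul_eq_mul, ← zpow_neg_one, ← zpow_add₀ hq, ← zpow_add₀ hq, ← hc]
        congr 1
        ring
      rw [← smul_assoc, ← smul_assoc, h1, h2, smul_comm (q - q⁻¹), mul_smul, mul_smul, ← smul_add]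
      congr 1
      have k2 := congrArg (· * w) key
      simpa only [add_mul, smul_mul_assoc] using k2⟩

theorem rep_commute (n : ℕ) (q : ℂ) (hq : q ≠ 0) (a : QPlane q) (m : JzAlg n q) :
    Commute (repA n q hq a) (repM n q hq m) := by
  refine ringQuot_commute (repA n q hq) _ (fun x => ?_) a
  refine (ringQuot_commute (repM n q hq) _ (fun y => ?_) m).symm
  obtain ⟨i, j⟩ := y
  simp only [repA, repM, RingQuot.liftAlgHom_mkAlgHom_apply, FreeAlgebra.lift_ι_apply]
  refine LinearMap.ext fun f => funext fun p => ?_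
  fin_cases x
  · rfl
  · simp only [Module.End.mul_apply, opM, opY, LinearMap.coe_mk, AddHom.coe_mk,
      Fin.mk_one, Matrix.cons_val_one, Matrix.cons_val_fin_one]
    rw [mul_smul_comm, smul_comm]

/-- The combined representation. -/
def repT (n : ℕ) (q : ℂ) (hq : q ≠ 0) : QPlane q ⊗[ℂ] JzAlg n q →ₐ[ℂ] Module.End ℂ (RepW n q) :=
  Algebra.TensorProduct.lift (repA n q hq) (repM n q hq) (rep_commute n q hq)

/-- Diagonal vectors. -/
def diagV (n : ℕ) (q : ℂ) (r : J0Alg n q) : RepW n q := fun p => if p.1 = p.2 then r else 0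

theorem repT_phi (n : ℕ) (q : ℂ) (hq : q ≠ 0) (r s : J0Alg n q) :
    repT n q hq (phiMap n q hq r) (diagV n q s) = diagV n q (r * s) := by
  induction r using ringQuot_free_ind generalizing s with
  | hc c =>
    rw [AlgHom.commutes, AlgHom.commutes]
    funext p
    simp only [Module.algebraMap_end_apply, Pi.smul_apply, diagV, ← Algebra.smul_def]
    split_ifs <;> simp
  | hg x =>
    obtain ⟨i, j⟩ := x
    change repT n q hq (phiMap n q hq (jgen n q i j)) _ = diagV n q (jgen n q i j * s)
    rw [phiMap_jgen, repT, Algebra.TensorProduct.lift_tmul, map_mul, map_pow]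
    have hx : repA n q hq (qpx q) = opX n q := by simp [repA, qpx]
    have hy : repA n q hq (qpy q) = opY n q := by simp [repA, qpy]
    have hm : repM n q hq (mgen n q i j) = opM n q i j := by simp [repM, mgen]
    rw [hx, hy, hm]
    funext p
    rw [Module.End.mul_apply, Module.End.mul_apply, opX_pow]
    simp only [opY, opM, LinearMap.coe_mk, AddHom.coe_mk, diagV]
    by_cases h : p.1 = p.2
    · rw [if_pos (by push_cast; omega), if_pos h, smul_smul, ← zpow_add₀ hq]
      rw [show p.1 - (((i : ℕ) + (j : ℕ) + 2 : ℕ) : ℤ) +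
        (((i : ℕ) : ℤ) + ((j : ℕ) : ℤ) + 2 - p.2) = 0 by push_cast; omega, zpow_zero, one_smul]
    · rw [if_neg (by push_cast; omega), if_neg h, mul_zero, smul_zero, smul_zero]
  | hm a b h1 h2 => rw [map_mul, map_mul, Module.End.mul_apply, h2, h1, mul_assoc]
  | ha a b h1 h2 =>
    rw [map_add, map_add, LinearMap.add_apply, h1, h2, add_mul]
    funext p
    simp only [diagV, Pi.add_apply]
    split_ifs <;> simp


theorem stmt8 (n : ℕ) (q : ℂ) (hq : q ≠ 0) :
    ∃ φ : J0Alg n q →ₐ[ℂ] (QPlane q ⊗[ℂ] JzAlg n q),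
      Function.Injective φ ∧
        ∀ i j : Fin n,
          φ (jgen n q i j) =
            (qpx q ^ ((i : ℕ) + (j : ℕ) + 2) * qpy q) ⊗ₜ[ℂ] mgen n q i j := by
  refine ⟨phiMap n q hq, fun a b h => ?_, phiMap_jgen n q hq⟩
  have ha := congrFun (repT_phi n q hq a 1) (0, 0)
  have hb := congrFun (repT_phi n q hq b 1) (0, 0)
  rw [h, hb] at ha
  simpa [diagV] using ha.symm
end
end
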